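/- Let H = {rrr, bbb} (the patterns: a monochromatic red triangle and a monochromatic blue triangle). Then h_2(n, H) = Θ(√(n log n)): there exist constants C1, C2 > 0 and an integer n0 such that for all n ≥ n0, C1·√(n·log n) ≤ h_2(n, H) ≤ C2·√(n·log n), where log denotes the base-2 logarithm. -/

import Mathlib

/-- The three edge colors: red, blue, yellow. -/
inductive Col : Type
  | r | b | y
  deriving DecidableEq

/-- A (symmetric) 3-edge-coloring of the complete graph `K_n` on vertex set `Fin n`. -/
structure Coloring (n : ℕ) where
  col : Fin n → Fin n → Col
  symm : ∀ i j, col i j = col j i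

/-- The pattern (multiset of edge colors) of the triangle on vertices `u, v, w`. -/
def triPattern {n : ℕ} (c : Coloring n) (u v w : Fin n) : Multiset Col :=
  {c.col u v, c.col v w, c.col u w}

/-- The coloring `c` contains the pattern `P`: some triangle has color multiset `P`. -/
def Contains {n : ℕ} (c : Coloring n) (P : Multiset Col) : Prop :=
  ∃ u v w : Fin n, u ≠ v ∧ v ≠ w ∧ u ≠ w ∧ triPattern c u v w = P

/-- The coloring `c` avoids every pattern in the family `H`. -/
def Avoids {n : ℕ} (c : Coloring n) (H : Set (Multiset Col)) : Prop :=
  ∀ P ∈ H, ¬ Contains c P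

/-- A vertex set `S` is two-colored under `c`: the edges inside `S` use at most
two of the three colors, i.e. some color is missing on the edges inside `S`. -/
def TwoColored {n : ℕ} (c : Coloring n) (S : Finset (Fin n)) : Prop :=
  ∃ x : Col, ∀ i ∈ S, ∀ j ∈ S, i ≠ j → c.col i j ≠ x

/-- `h2 c` is the maximum size of a vertex set whose induced edges use at most
two of the three colors. -/
noncomputable def h2 {n : ℕ} (c : Coloring n) : ℕ :=
  sSup {k | ∃ S : Finset (Fin n), TwoColored c S ∧ S.card = k}

/-- `h2n n H = min { h2 c : c a 3-edge-coloring of K_n avoiding all patterns in H }`. -/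
noncomputable def h2n (n : ℕ) (H : Set (Multiset Col)) : ℕ :=
  sInf {m | ∃ c : Coloring n, Avoids c H ∧ h2 c = m}

/-- Pattern abbreviations. -/
def Prrr : Multiset Col := {Col.r, Col.r, Col.r}
def Pbbb : Multiset Col := {Col.b, Col.b, Col.b}
def Pyyy : Multiset Col := {Col.y, Col.y, Col.y}
def Prrb : Multiset Col := {Col.r, Col.r, Col.b}
def Prry : Multiset Col := {Col.r, Col.r, Col.y}
def Pbbr : Multiset Col := {Col.b, Col.b, Col.r}
def Pbby : Multiset Col := {Col.b, Col.b, Col.y}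
def Pyyr : Multiset Col := {Col.y, Col.y, Col.r}
def Pyyb : Multiset Col := {Col.y, Col.y, Col.b}
def Prby : Multiset Col := {Col.r, Col.b, Col.y}


section partA
open Finset

lemma lowAux (j x : ℕ) : j * (2 ^ x + 1) ≤ 4 * 4 ^ j + 4 * (x * 2 ^ (x - 1)) := by
  rcases le_total x j with h | h
  · have h1 : 2 ^ x ≤ 2 ^ j := Nat.pow_le_pow_right (by norm_num) h
    have h2 : j < 2 ^ j := Nat.lt_two_pow_self
    have h3 : 4 ^ j = 2 ^ j * 2 ^ j := by rw [← mul_pow]; norm_num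
    have h4 : 1 ≤ 2 ^ j := Nat.one_le_two_pow
    rw [h3]
    nlinarith [Nat.zero_le (x * 2 ^ (x - 1))]
  · rcases Nat.eq_zero_or_pos x with h0 | h0
    · subst h0
      have : j = 0 := by omega
      subst this; simp
    · obtain ⟨y, rfl⟩ : ∃ y, x = y + 1 := ⟨x - 1, by omega⟩
      have h4 : 1 ≤ 2 ^ y := Nat.one_le_two_pow
      simp only [Nat.add_sub_cancel, pow_succ]
      nlinarith [Nat.zero_le (4 ^ j)]

lemma sumCardPow {V : Type*} [DecidableEq V] (X : Finset V) :
    ∑ A ∈ X.powerset, A.card = X.card * 2 ^ (X.card - 1) := by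
  induction X using Finset.induction_on with
  | empty => simp
  | insert a s ha ih =>
    rw [sum_powerset_insert ha, ih]
    have h : ∑ t ∈ s.powerset, (insert a t).card = ∑ t ∈ s.powerset, (t.card + 1) := by
      refine sum_congr rfl fun t ht => ?_
      rw [card_insert_of_notMem (fun h => ha (mem_powerset.1 ht h))]
    rw [h, sum_add_distrib, ih, card_insert_of_notMem ha]
    simp only [sum_const, card_powerset, smul_eq_mul, mul_one, Nat.add_sub_cancel]
    rcases Nat.eq_zero_or_pos s.card with h0 | h0
    · simp [h0]
    · obtain ⟨y, hy⟩ : ∃ y, s.card = y + 1 := ⟨s.card - 1, by omega⟩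
      rw [hy]; simp only [Nat.add_sub_cancel, pow_succ]; ring

open Classical in
lemma fiberBound {V : Type*} [Fintype V] (G : SimpleGraph V)
    (htf : ∀ u v w, G.Adj u v → G.Adj v w → G.Adj u w → False) (j : ℕ) (v : V)
    (I : Finset (Finset V)) (hI : I = univ.filter (fun W : Finset V => ∀ a ∈ W, ∀ b ∈ W, ¬ G.Adj a b)) :
    j * I.card ≤ ∑ W ∈ I, (4 * 4 ^ j * (if v ∈ W then 1 else 0) + 4 * (W.filter (fun u => G.Adj v u)).card) := by
  have hmem : ∀ W, W ∈ I ↔ ∀ a ∈ W, ∀ b ∈ W, ¬ G.Adj a b := by intro W; rw [hI]; simp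
  let key : Finset V → Finset V := fun W => W.filter (fun u => u ≠ v ∧ ¬ G.Adj v u)
  have e1 : I.card = ∑ H ∈ I.image key, (I.filter (fun W => key W = H)).card :=
    Finset.card_eq_sum_card_image key I
  rw [e1, ← Finset.sum_fiberwise_of_maps_to (g := key) (t := I.image key)
    (fun W hW => mem_image_of_mem _ hW), Finset.mul_sum]
  refine Finset.sum_le_sum ?_
  intro H hH
  obtain ⟨W0, hW0, rfl⟩ := mem_image.1 hH
  set H := key W0 with hHdef
  have hHI : ∀ a ∈ H, ∀ b ∈ H, ¬ G.Adj a b := fun a ha b hb =>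
    (hmem W0).1 hW0 a (mem_filter.1 ha).1 b (mem_filter.1 hb).1
  have hHv : ∀ a ∈ H, a ≠ v ∧ ¬ G.Adj v a := fun a ha => (mem_filter.1 ha).2
  let X : Finset V := univ.filter (fun u => G.Adj v u ∧ ∀ a ∈ H, ¬ G.Adj a u)
  have hXv : ∀ a ∈ X, G.Adj v a := fun a ha => (mem_filter.1 ha).2.1
  have hXH : ∀ a ∈ X, ∀ c ∈ H, ¬ G.Adj c a := fun a ha => (mem_filter.1 ha).2.2
  have hXX : ∀ a ∈ X, ∀ c ∈ X, ¬ G.Adj a c := fun a ha c hc hac =>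
    htf v a c (hXv a ha) hac (hXv c hc)
  have hfib : I.filter (fun W => key W = H) = insert (insert v H) (X.powerset.image (fun A => H ∪ A)) := by
    ext W
    simp only [mem_filter, mem_insert, mem_image, mem_powerset]
    constructor
    · rintro ⟨hW, hk⟩
      have hWI := (hmem W).1 hW
      have hHW : ∀ a, a ∈ H ↔ a ∈ W ∧ a ≠ v ∧ ¬ G.Adj v a := by
        intro a; rw [← hk]; simp [key]
      by_cases hv : v ∈ W
      · left
        ext a
        simp only [mem_insert, hHW]
        constructor
        · intro ha
          by_cases hav : a = v
          · exact Or.inl hav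
          · exact Or.inr ⟨ha, hav, hWI v hv a ha⟩
        · rintro (rfl | h)
          · exact hv
          · exact h.1
      · right
        refine ⟨W.filter (fun u => G.Adj v u), ?_, ?_⟩
        · intro a ha
          rw [mem_filter] at ha
          simp only [X, mem_filter, mem_univ, true_and]
          refine ⟨ha.2, fun c hc => hWI c ((hHW c).1 hc).1 a ha.1⟩
        · ext a
          simp only [mem_union, hHW, mem_filter]
          constructor
          · rintro (h | h)
            · exact h.1
            · exact h.1
          · intro ha
            by_cases hav : G.Adj v a
            · exact Or.inr ⟨ha, hav⟩
            · refine Or.inl ⟨ha, ?_, hav⟩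
              rintro rfl; exact hv ha
    · rintro (rfl | ⟨A, hA, rfl⟩)
      · constructor
        · rw [hmem]
          intro a ha c hc hac
          rw [mem_insert] at ha hc
          rcases ha with rfl | ha <;> rcases hc with rfl | hc
          · exact G.loopless.irrefl _ hac
          · exact (hHv c hc).2 hac
          · exact (hHv a ha).2 hac.symm
          · exact hHI a ha c hc hac
        · ext a
          simp only [key, mem_filter, mem_insert]
          constructor
          · rintro ⟨rfl | h, h2, h3⟩
            · exact absurd rfl h2
            · exact h
          · intro h
            exact ⟨Or.inr h, hHv a h⟩
      · constructor
        · rw [hmem]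
          intro a ha c hc hac
          rw [mem_union] at ha hc
          rcases ha with ha | ha <;> rcases hc with hc | hc
          · exact hHI a ha c hc hac
          · exact hXH c (hA hc) a ha hac
          · exact hXH a (hA ha) c hc hac.symm
          · exact hXX a (hA ha) c (hA hc) hac
        · ext a
          simp only [key, mem_filter, mem_union]
          constructor
          · rintro ⟨h | h, h2, h3⟩
            · exact h
            · exact absurd (hXv a (hA h)) h3
          · intro h
            exact ⟨Or.inl h, hHv a h⟩
  have hdisj : ∀ A ∈ X.powerset, (H ∪ A).filter (fun u => G.Adj v u) = A := by
    intro A hA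
    rw [mem_powerset] at hA
    ext a
    simp only [mem_filter, mem_union]
    constructor
    · rintro ⟨h | h, h2⟩
      · exact absurd h2 (hHv a h).2
      · exact h
    · intro h; exact ⟨Or.inr h, hXv a (hA h)⟩
  have hinj : Set.InjOn (fun A => H ∪ A) (X.powerset : Set (Finset V)) := by
    intro A hA B hB hAB
    have := hdisj A hA
    rw [← this, ← hdisj B hB]
    simp only at hAB
    rw [hAB]
  have hnot : insert v H ∉ X.powerset.image (fun A => H ∪ A) := by
    intro h
    obtain ⟨A, hA, hAe⟩ := mem_image.1 h
    have : v ∈ H ∪ A := by rw [hAe]; exact mem_insert_self _ _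
    rcases mem_union.1 this with h | h
    · exact (hHv v h).1 rfl
    · exact G.loopless.irrefl _ (hXv v (mem_powerset.1 hA h))
  rw [hfib, card_insert_of_notMem hnot, sum_insert hnot, card_image_of_injOn hinj, card_powerset,
    sum_image hinj]
  have h2 : ∑ A ∈ X.powerset, 4 * A.card ≤ ∑ A ∈ X.powerset, (4 * 4 ^ j * (if v ∈ H ∪ A then 1 else 0) + 4 * ((H ∪ A).filter (fun u => G.Adj v u)).card) := by
    refine sum_le_sum ?_
    intro A hA
    rw [hdisj A hA]; omega
  have h3 : ∑ A ∈ X.powerset, A.card = X.card * 2 ^ (X.card - 1) := sumCardPow X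
  rw [← mul_sum, h3] at h2
  have h4 := lowAux j X.card
  have h5 : (if v ∈ insert v H then 1 else 0) = 1 := if_pos (mem_insert_self _ _)
  rw [h5]
  omega

open Classical in
lemma alphaLower {V : Type*} [Fintype V] (G : SimpleGraph V)
    (htf : ∀ u v w, G.Adj u v → G.Adj v w → G.Adj u w → False) (j : ℕ)
    (hdeg : ∀ v, (univ.filter (fun u => G.Adj v u)).card ≤ 4 ^ j) :
    ∃ W : Finset V, (∀ a ∈ W, ∀ b ∈ W, ¬ G.Adj a b) ∧ j * Fintype.card V ≤ 8 * 4 ^ j * W.card := by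
  set I := univ.filter (fun W : Finset V => ∀ a ∈ W, ∀ b ∈ W, ¬ G.Adj a b) with hI
  have h1 : ∑ v : V, j * I.card ≤ ∑ v : V, ∑ W ∈ I, (4 * 4 ^ j * (if v ∈ W then 1 else 0) + 4 * (W.filter (fun u => G.Adj v u)).card) :=
    sum_le_sum fun v _ => fiberBound G htf j v I hI
  rw [sum_comm] at h1
  have h2 : ∀ W ∈ I, ∑ v : V, (4 * 4 ^ j * (if v ∈ W then 1 else 0) + 4 * (W.filter (fun u => G.Adj v u)).card) ≤ 8 * 4 ^ j * W.card := by
    intro W _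
    rw [sum_add_distrib, ← mul_sum, ← mul_sum]
    have a1 : ∑ v : V, (if v ∈ W then 1 else 0) = W.card := by simp
    have a2 : ∑ v : V, (W.filter (fun u => G.Adj v u)).card = ∑ u ∈ W, (univ.filter (fun v => G.Adj v u)).card := by
      simp only [card_filter]
      rw [sum_comm]
    have a3 : ∑ u ∈ W, (univ.filter (fun v => G.Adj v u)).card ≤ W.card * 4 ^ j := by
      rw [← smul_eq_mul]
      refine sum_le_card_nsmul _ _ _ ?_
      intro u _
      have := hdeg u
      simpa only [G.adj_comm] using this
    rw [a1, a2]
    nlinarith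
  by_contra hcon
  push Not at hcon
  have hne : I.Nonempty := ⟨∅, by rw [hI]; simp⟩
  have h3 : ∑ W ∈ I, ∑ v : V, (4 * 4 ^ j * (if v ∈ W then 1 else 0) + 4 * (W.filter (fun u => G.Adj v u)).card) < ∑ W ∈ I, j * Fintype.card V := by
    refine sum_lt_sum_of_nonempty hne ?_
    intro W hW
    refine (h2 W hW).trans_lt (hcon W ?_)
    rw [hI] at hW
    simpa using hW
  simp only [sum_const, smul_eq_mul, card_univ] at h1 h3
  nlinarith
end partA

section partB
open Finset

/-- uniform expectation over a finite type -/
noncomputable def Ex {Ω : Type*} [Fintype Ω] (F : Ω → ℝ) : ℝ := (∑ ω, F ω) / Fintype.card Ω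

open Classical in
/-- uniform probability over a finite type -/
noncomputable def Pr {Ω : Type*} [Fintype Ω] (P : Ω → Prop) : ℝ :=
  Ex (fun ω => if P ω then (1 : ℝ) else 0)

section basic
variable {Ω : Type*} [Fintype Ω]

lemma Ex_mono {F G : Ω → ℝ} (h : ∀ ω, F ω ≤ G ω) : Ex F ≤ Ex G := by
  unfold Ex
  exact div_le_div_of_nonneg_right (sum_le_sum fun i _ => h i) (Nat.cast_nonneg _)

lemma Ex_add (F G : Ω → ℝ) : Ex (fun ω => F ω + G ω) = Ex F + Ex G := by
  unfold Ex; rw [sum_add_distrib, add_div]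

lemma Ex_sub (F G : Ω → ℝ) : Ex (fun ω => F ω - G ω) = Ex F - Ex G := by
  unfold Ex; rw [sum_sub_distrib, sub_div]

lemma Ex_mul_left (c : ℝ) (F : Ω → ℝ) : Ex (fun ω => c * F ω) = c * Ex F := by
  unfold Ex; rw [← mul_sum, mul_div_assoc]

lemma Ex_sum {ι : Type*} (s : Finset ι) (F : ι → Ω → ℝ) :
    Ex (fun ω => ∑ i ∈ s, F i ω) = ∑ i ∈ s, Ex (F i) := by
  unfold Ex; rw [sum_comm, sum_div]

lemma Ex_const [Nonempty Ω] (c : ℝ) : Ex (fun _ : Ω => c) = c := by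
  unfold Ex
  have : (Fintype.card Ω : ℝ) ≠ 0 := by exact_mod_cast Fintype.card_ne_zero
  rw [sum_const, card_univ, nsmul_eq_mul]; field_simp

lemma Ex_nonneg {F : Ω → ℝ} (h : ∀ ω, 0 ≤ F ω) : 0 ≤ Ex F := by
  unfold Ex; exact div_nonneg (sum_nonneg fun i _ => h i) (Nat.cast_nonneg _)

lemma Pr_nonneg (P : Ω → Prop) : 0 ≤ Pr P := by
  unfold Pr; refine Ex_nonneg fun ω => ?_
  split_ifs <;> norm_num

lemma Pr_mono {P Q : Ω → Prop} (h : ∀ ω, P ω → Q ω) : Pr P ≤ Pr Q := by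
  classical
  unfold Pr; refine Ex_mono fun ω => ?_
  by_cases hp : P ω
  · simp [hp, h ω hp]
  · simp only [hp, if_false]; split_ifs <;> norm_num

lemma Pr_or (P Q : Ω → Prop) : Pr (fun ω => P ω ∨ Q ω) ≤ Pr P + Pr Q := by
  classical
  unfold Pr; rw [← Ex_add]; refine Ex_mono fun ω => ?_
  by_cases hp : P ω <;> by_cases hq : Q ω <;> simp [hp, hq]

lemma Pr_exists {ι : Type*} (s : Finset ι) (P : ι → Ω → Prop) :
    Pr (fun ω => ∃ i ∈ s, P i ω) ≤ ∑ i ∈ s, Pr (P i) := by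
  classical
  unfold Pr; rw [← Ex_sum]; refine Ex_mono fun ω => ?_
  by_cases h : ∃ i ∈ s, P i ω
  · obtain ⟨i, hi, hP⟩ := h
    rw [if_pos ⟨i, hi, hP⟩]
    have := single_le_sum (f := fun i => if P i ω then (1:ℝ) else 0)
      (fun j _ => by split_ifs <;> norm_num) hi
    simpa [hP] using this
  · rw [if_neg h]
    exact sum_nonneg fun j _ => by split_ifs <;> norm_num

lemma Pr_exists_le {ι : Type*} (s : Finset ι) (P : ι → Ω → Prop) (N c : ℝ) (hN : (s.card : ℝ) ≤ N)
    (hc : 0 ≤ c) (h : ∀ i ∈ s, Pr (P i) ≤ c) : Pr (fun ω => ∃ i ∈ s, P i ω) ≤ N * c := by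
  refine (Pr_exists s P).trans ((sum_le_card_nsmul _ _ c h).trans ?_)
  rw [nsmul_eq_mul]
  exact mul_le_mul_of_nonneg_right hN hc

lemma Pr_markov (P : Ω → Prop) (F : Ω → ℝ) (a : ℝ) (ha : 0 < a) (hF : ∀ ω, 0 ≤ F ω)
    (h : ∀ ω, P ω → a ≤ F ω) : Pr P ≤ Ex F / a := by
  classical
  rw [le_div_iff₀ ha, mul_comm]
  unfold Pr; rw [← Ex_mul_left]; refine Ex_mono fun ω => ?_
  by_cases hp : P ω
  · simpa [hp] using h ω hp
  · simpa [hp] using hF ω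

lemma Pr_lt_one_exists [Nonempty Ω] (P : Ω → Prop) (h : Pr P < 1) : ∃ ω, ¬ P ω := by
  by_contra hc
  push Not at hc
  have : Pr P = 1 := by
    unfold Pr
    simp only [hc, if_true]
    exact Ex_const 1
  linarith

lemma Pr_equiv {Ω' : Type*} [Fintype Ω'] (e : Ω ≃ Ω') (P : Ω' → Prop) :
    Pr (fun ω => P (e ω)) = Pr P := by
  classical
  unfold Pr Ex
  rw [Fintype.card_congr e, Equiv.sum_comp e (fun ω => if P ω then (1:ℝ) else 0)]

end basic

lemma Ex_pi {ι : Type*} [Fintype ι] [DecidableEq ι] {α : Type*} [Fintype α]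
    (g : ι → α → ℝ) : Ex (fun f : ι → α => ∏ i, g i (f i)) = ∏ i, Ex (g i) := by
  unfold Ex
  rw [prod_div_distrib, prod_univ_sum, Fintype.piFinset_univ]
  simp

lemma Ex_pi2 {ι κ : Type*} [Fintype ι] [DecidableEq ι] [Fintype κ] [DecidableEq κ] {α : Type*} [Fintype α]
    (g : ι → κ → α → ℝ) :
    Ex (fun f : ι → κ → α => ∏ i, ∏ j, g i j (f i j)) = ∏ i, ∏ j, Ex (g i j) := by
  rw [Ex_pi (fun i (fi : κ → α) => ∏ j, g i j (fi j))]
  exact prod_congr rfl fun i _ => Ex_pi (g i)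

open Classical in
lemma Ex_ind {α : Type*} [Fintype α] (A : Finset α) :
    Ex (fun x : α => if x ∈ A then (1:ℝ) else 0) = A.card / Fintype.card α := by
  unfold Ex; simp

open Classical in
lemma Pr_all {ι : Type*} [Fintype ι] [DecidableEq ι] {α : Type*} [Fintype α] [Nonempty α]
    (A : Finset α) (T : Finset ι) :
    Pr (fun f : ι → α => ∀ i ∈ T, f i ∈ A) = ((A.card : ℝ) / Fintype.card α) ^ T.card := by
  have h : Pr (fun f : ι → α => ∀ i ∈ T, f i ∈ A) =
      Ex (fun f : ι → α => ∏ i, (if i ∈ T then (if f i ∈ A then (1:ℝ) else 0) else 1)) := by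
    unfold Pr; congr 1; ext f
    rw [prod_ite_mem, univ_inter]
    by_cases h : ∀ i ∈ T, f i ∈ A
    · rw [if_pos h, prod_eq_one fun i hi => if_pos (h i hi)]
    · rw [if_neg h]
      push Not at h
      obtain ⟨i, hi, hA⟩ := h
      rw [prod_eq_zero hi]; rw [if_neg hA]
  rw [h, Ex_pi (fun i a => if i ∈ T then (if a ∈ A then (1:ℝ) else 0) else 1)]
  have h2 : ∀ i, Ex (fun a : α => if i ∈ T then (if a ∈ A then (1:ℝ) else 0) else 1) =
      if i ∈ T then ((A.card : ℝ) / Fintype.card α) else 1 := by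
    intro i
    by_cases hi : i ∈ T
    · simp only [hi, if_true]; exact Ex_ind A
    · simp only [hi, if_false]; exact Ex_const 1
  simp only [h2]
  rw [prod_ite_mem, univ_inter, prod_const]

open Classical in
/-- at least `t` indices of `U` land in `A` -/
lemma Pr_atLeast {ι : Type*} [Fintype ι] [DecidableEq ι] {α : Type*} [Fintype α] [Nonempty α]
    (A : Finset α) (U : Finset ι) (t : ℕ) :
    Pr (fun f : ι → α => t ≤ (U.filter (fun i => f i ∈ A)).card) ≤
      U.card.choose t * ((A.card : ℝ) / Fintype.card α) ^ t := by
  refine (Pr_mono (Q := fun f => ∃ T ∈ U.powersetCard t, ∀ i ∈ T, f i ∈ A) ?_).trans ?_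
  · intro f hf
    obtain ⟨T, hT, hc⟩ := exists_subset_card_eq hf
    refine ⟨T, mem_powersetCard.2 ⟨hT.trans (filter_subset _ _), hc⟩, fun i hi => (mem_filter.1 (hT hi)).2⟩
  · refine Pr_exists_le _ _ _ _ ?_ (by positivity) ?_
    · rw [card_powersetCard]
    · intro T hT
      rw [Pr_all, (mem_powersetCard.1 hT).2]

/-- for a matrix with entries in `Fin q`, entries of `T` are all zero -/
lemma Pr_mat {ι κ : Type*} [Fintype ι] [DecidableEq ι] [Fintype κ] [DecidableEq κ] (q : ℕ) [NeZero q]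
    (T : Finset (ι × κ)) :
    Pr (fun f : ι → κ → Fin q => ∀ e ∈ T, f e.1 e.2 = 0) = (1 / (q:ℝ)) ^ T.card := by
  classical
  have h := Pr_equiv (Equiv.curry ι κ (Fin q)) (fun f : ι → κ → Fin q => ∀ e ∈ T, f e.1 e.2 = 0)
  rw [← h]
  have h2 := Pr_all (ι := ι × κ) (α := Fin q) {0} T
  simp only [mem_singleton, card_singleton, Fintype.card_fin, Nat.cast_one] at h2
  rw [← h2]
  congr 1

/-- `choose U t ≤ (e U / t)^t`. -/
lemma choose_le_exp (U t : ℕ) (ht : 0 < t) :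
    (U.choose t : ℝ) ≤ (Real.exp 1 * U / t) ^ t := by
  have h1 : (U.choose t : ℝ) ≤ (U:ℝ) ^ t / t.factorial := Nat.choose_le_pow_div t U
  have h2 : (t:ℝ) ^ t / t.factorial ≤ Real.exp t := Real.pow_div_factorial_le_exp (t:ℝ) (by positivity) t
  have h3 : Real.exp t = Real.exp 1 ^ t := by rw [← Real.exp_nat_mul, mul_one]
  have ht' : (0:ℝ) < t := by exact_mod_cast ht
  rw [h3, div_le_iff₀ (by positivity)] at h2
  refine h1.trans ?_
  rw [div_pow, mul_pow, div_le_div_iff₀ (by positivity) (by positivity)]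
  have h4 : 0 ≤ (U:ℝ) ^ t := by positivity
  nlinarith

lemma choose_mul_le (U t : ℕ) (ht : 0 < t) (ρ ρ' : ℝ) (hρ : 0 ≤ ρ) (h : 3 * U * ρ ≤ ρ' * t) :
    (U.choose t : ℝ) * ρ ^ t ≤ ρ' ^ t := by
  have ht' : (0:ℝ) < t := by exact_mod_cast ht
  calc (U.choose t : ℝ) * ρ ^ t ≤ (Real.exp 1 * U / t) ^ t * ρ ^ t :=
        mul_le_mul_of_nonneg_right (choose_le_exp U t ht) (by positivity)
    _ = (Real.exp 1 * U * ρ / t) ^ t := by rw [← mul_pow]; ring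
    _ ≤ ρ' ^ t := by
        refine pow_le_pow_left₀ (by positivity) ?_ t
        rw [div_le_iff₀ ht']
        have h3 : Real.exp 1 ≤ 3 := by linarith [Real.exp_one_lt_d9]
        have : 0 ≤ (U:ℝ) * ρ := by positivity
        nlinarith
end partB

section partC
open Finset
set_option linter.unusedSectionVars false

section rows
variable {X : Type*} [Fintype X] [DecidableEq X] {q : ℕ} [NeZero q]

/-- zero set of a row -/
def Rz (f : X → X → Fin q) (x : X) : Finset X := univ.filter (fun y => f x y = 0)

lemma P1_bound (D : ℕ) :
    Pr (fun f : X → X → Fin q => ∃ x ∈ (univ : Finset X), D ≤ (Rz f x).card) ≤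
      Fintype.card X * ((Fintype.card X).choose D * (1 / (q:ℝ)) ^ D) := by
  refine Pr_exists_le _ _ _ _ (by simp) (by positivity) ?_
  intro x _
  refine (Pr_mono (Q := fun f : X → X → Fin q => ∃ T ∈ (univ : Finset X).powersetCard D,
    ∀ e ∈ T.image (fun y => (x, y)), f e.1 e.2 = 0) ?_).trans ?_
  · intro f hf
    obtain ⟨T, hT, hc⟩ := exists_subset_card_eq hf
    refine ⟨T, mem_powersetCard.2 ⟨subset_univ _, hc⟩, fun e he => ?_⟩
    obtain ⟨y, hy, rfl⟩ := mem_image.1 he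
    exact (mem_filter.1 (hT hy)).2
  · refine Pr_exists_le _ _ _ _ ?_ (by positivity) ?_
    · rw [card_powersetCard, card_univ]
    · intro T hT
      rw [Pr_mat, card_image_of_injective _ (Prod.mk_right_injective x), (mem_powersetCard.1 hT).2]

lemma P2_bound (K : ℕ) :
    Pr (fun f : X → X → Fin q => ∃ z ∈ (univ : Finset (X × X)), z.1 ≠ z.2 ∧ K ≤ (Rz f z.1 ∩ Rz f z.2).card) ≤
      (Fintype.card X : ℝ) ^ 2 * ((Fintype.card X).choose K * (1 / (q:ℝ)) ^ (2 * K)) := by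
  refine Pr_exists_le _ _ _ _ (by rw [card_univ, Fintype.card_prod, sq]; push_cast; rfl) (by positivity) ?_
  rintro ⟨x, x'⟩ _
  by_cases hxx : x = x'
  · refine (Pr_mono (Q := fun _ => False) (fun f hf => hf.1 hxx)).trans ?_
    have : Pr (fun _ : X → X → Fin q => False) = 0 := by
      unfold Pr Ex; simp
    rw [this]; positivity
  refine (Pr_mono (Q := fun f : X → X → Fin q => ∃ T ∈ (univ : Finset X).powersetCard K,
    ∀ e ∈ ({x, x'} : Finset X) ×ˢ T, f e.1 e.2 = 0) ?_).trans ?_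
  · intro f hf
    obtain ⟨T, hT, hc⟩ := exists_subset_card_eq hf.2
    refine ⟨T, mem_powersetCard.2 ⟨subset_univ _, hc⟩, fun e he => ?_⟩
    obtain ⟨h1, h2⟩ := mem_product.1 he
    have h3 := mem_inter.1 (hT h2)
    simp only [mem_insert, mem_singleton] at h1
    rcases h1 with h1 | h1
    · rw [h1]; exact (mem_filter.1 h3.1).2
    · rw [h1]; exact (mem_filter.1 h3.2).2
  · refine Pr_exists_le _ _ _ _ ?_ (by positivity) ?_
    · rw [card_powersetCard, card_univ]
    · intro T hT
      rw [Pr_mat, card_product, card_pair hxx, (mem_powersetCard.1 hT).2]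

/-- weighted row sum -/
noncomputable def Zw (w : X → ℝ) (g : X → Fin q) : ℝ := ∑ y, if g y = 0 then w y else 0

lemma Zw_nonneg (w : X → ℝ) (hw : ∀ y, 0 ≤ w y) (g : X → Fin q) : 0 ≤ Zw w g :=
  sum_nonneg fun y _ => by split_ifs <;> simp [hw]

lemma Ex_zero (c : ℝ) : Ex (fun j : Fin q => if j = 0 then c else 0) = c / q := by
  unfold Ex; simp

lemma Ex_Zw (w : X → ℝ) : Ex (Zw (q := q) w) = (∑ y, w y) / q := by
  change Ex (fun g : X → Fin q => ∑ y, if g y = 0 then w y else 0) = _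
  rw [Ex_sum, sum_div]
  refine sum_congr rfl fun y _ => ?_
  have h := Ex_pi (ι := X) (α := Fin q) (fun i a => if i = y then (if a = 0 then w y else 0) else 1)
  have h2 : ∀ i, Ex (fun a : Fin q => if i = y then (if a = 0 then w y else 0) else 1) =
      if i = y then w y / q else 1 := by
    intro i
    by_cases hi : i = y
    · simp only [hi, if_true]; exact Ex_zero _
    · simp only [hi, if_false]; exact Ex_const 1
  simp only [h2] at h
  simpa using h

lemma Ex_exp_Zw (w : X → ℝ) (θ : ℝ) :
    Ex (fun g : X → Fin q => Real.exp (θ * Zw w g)) =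
      ∏ y, (1 + (Real.exp (θ * w y) - 1) / q) := by
  have h : ∀ g : X → Fin q, Real.exp (θ * Zw w g) =
      ∏ y, (1 + if g y = 0 then Real.exp (θ * w y) - 1 else 0) := by
    intro g
    unfold Zw
    rw [mul_sum, Real.exp_sum]
    refine prod_congr rfl fun y _ => ?_
    split_ifs <;> simp
  simp only [h]
  rw [Ex_pi (fun y a => 1 + if a = 0 then Real.exp (θ * w y) - 1 else 0)]
  refine prod_congr rfl fun y _ => ?_
  rw [Ex_add, Ex_zero, Ex_const]

lemma exp_quad (s : ℝ) (hs : 0 ≤ s) : s ^ 2 * Real.exp s ≤ 2 * (Real.exp (2 * s) - 1 - 2 * s) := by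
  have h1 : 1 + s + s ^ 2 / 2 ≤ Real.exp s := Real.quadratic_le_exp_of_nonneg hs
  have h2 : 1 + s ≤ Real.exp s := by nlinarith
  have h3 : Real.exp (2 * s) = Real.exp s * Real.exp s := by rw [← Real.exp_add]; ring_nf
  rw [h3]
  nlinarith [mul_nonneg hs (by linarith : 0 ≤ Real.exp s - 1), Real.exp_pos s]

lemma exp_le_quad (u : ℝ) (h0 : 0 ≤ u) (h1 : u ≤ 1) : Real.exp u ≤ 1 + u + u ^ 2 := by
  have := Real.abs_exp_sub_one_sub_id_le (x := u) (by rw [abs_of_nonneg h0]; exact h1)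
  have := (abs_le.1 this).2
  linarith

/-- one row: exponential moment of the truncated square -/
lemma row_moment (w : X → ℝ) (b lam a k : ℝ) (hw : ∀ y, 0 ≤ w y) (hwb : ∀ y, w y ≤ b)
    (hk : ∑ y, w y = k) (hlam : 0 < lam) (ha : 0 < a) (hb : 2 * (lam * a) * b ≤ 1)
    (hp : 2 * (2 * (lam * a)) * k / q ≤ 1) :
    Ex (fun g : X → Fin q => Real.exp (lam * (if Zw w g ≤ a then (Zw w g) ^ 2 else 0))) ≤
      1 + 8 * lam * (b * k / q + 4 * (k / q) ^ 2) := by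
  have hq : (0:ℝ) < q := by exact_mod_cast Nat.pos_of_ne_zero (NeZero.ne q)
  set δ := lam * a with hδ
  have hδ0 : 0 < δ := by positivity
  have hk0 : 0 ≤ k := by rw [← hk]; exact sum_nonneg fun y _ => hw y
  -- pointwise
  have hpt : ∀ g : X → Fin q, Real.exp (lam * (if Zw w g ≤ a then (Zw w g) ^ 2 else 0)) ≤
      1 + (2 * lam / δ ^ 2) * (Real.exp (2 * δ * Zw w g) - 1 - 2 * δ * Zw w g) := by
    intro g
    set Z := Zw w g
    have hZ : 0 ≤ Z := Zw_nonneg w hw g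
    have hquad := exp_quad (δ * Z) (by positivity)
    have hmain : lam * Z ^ 2 * Real.exp (δ * Z) ≤
        (2 * lam / δ ^ 2) * (Real.exp (2 * δ * Z) - 1 - 2 * δ * Z) := by
      have e1 : lam * Z ^ 2 * Real.exp (δ * Z) = (lam / δ ^ 2) * ((δ * Z) ^ 2 * Real.exp (δ * Z)) := by
        field_simp
      rw [e1]
      calc (lam / δ ^ 2) * ((δ * Z) ^ 2 * Real.exp (δ * Z))
          ≤ (lam / δ ^ 2) * (2 * (Real.exp (2 * (δ * Z)) - 1 - 2 * (δ * Z))) :=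
            mul_le_mul_of_nonneg_left hquad (by positivity)
        _ = _ := by rw [← mul_assoc 2 δ Z]; ring
    split_ifs with h
    · have h1 : lam * Z ^ 2 ≤ δ * Z := by
        rw [hδ, sq, mul_assoc, ← mul_assoc]
        rw [mul_assoc]
        exact mul_le_mul_of_nonneg_left (mul_le_mul_of_nonneg_right h hZ) hlam.le
      have h2 : Real.exp (lam * Z ^ 2) ≤ 1 + lam * Z ^ 2 * Real.exp (lam * Z ^ 2) := by
        have h3 := Real.add_one_le_exp (-(lam * Z ^ 2))
        have h4 : Real.exp (-(lam * Z ^ 2)) * Real.exp (lam * Z ^ 2) = 1 := by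
          rw [← Real.exp_add]; simp
        nlinarith [Real.exp_pos (lam * Z ^ 2)]
      have h5 : Real.exp (lam * Z ^ 2) ≤ Real.exp (δ * Z) := Real.exp_le_exp.2 h1
      have h6 : lam * Z ^ 2 * Real.exp (lam * Z ^ 2) ≤ lam * Z ^ 2 * Real.exp (δ * Z) :=
        mul_le_mul_of_nonneg_left h5 (by positivity)
      linarith
    · rw [mul_zero, Real.exp_zero]
      have : 0 ≤ lam * Z ^ 2 * Real.exp (δ * Z) := by positivity
      linarith
  refine (Ex_mono hpt).trans ?_
  rw [Ex_add, Ex_mul_left, Ex_sub, Ex_sub, Ex_mul_left, Ex_const, Ex_exp_Zw, Ex_Zw, hk]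
  set θ := 2 * δ with hθ
  have hθ0 : 0 < θ := by positivity
  set u := (θ * k + θ ^ 2 * b * k) / q with hu
  have hθb : θ * b ≤ 1 := by rw [hθ]; exact hb
  have hprod : ∏ y, (1 + (Real.exp (θ * w y) - 1) / q) ≤ Real.exp u := by
    have h1 : ∀ y ∈ (univ : Finset X), 1 + (Real.exp (θ * w y) - 1) / q ≤
        Real.exp ((θ * w y + θ ^ 2 * b * w y) / q) := by
      intro y _
      have hy0 : 0 ≤ θ * w y := mul_nonneg hθ0.le (hw y)
      have hy1 : θ * w y ≤ 1 := (mul_le_mul_of_nonneg_left (hwb y) hθ0.le).trans hθb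
      have h2 := exp_le_quad _ hy0 hy1
      have h3 : (θ * w y) ^ 2 ≤ θ ^ 2 * b * w y := by
        rw [mul_pow, sq (w y), mul_assoc]
        exact mul_le_mul_of_nonneg_left (mul_le_mul_of_nonneg_right (hwb y) (hw y)) (by positivity)
      have h4 := Real.add_one_le_exp ((θ * w y + θ ^ 2 * b * w y) / q)
      have h5 : (Real.exp (θ * w y) - 1) / q ≤ (θ * w y + θ ^ 2 * b * w y) / q :=
        div_le_div_of_nonneg_right (by linarith) hq.le
      linarith
    refine (prod_le_prod (fun y _ => ?_) h1).trans ?_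
    · have hy0 : 0 ≤ θ * w y := mul_nonneg hθ0.le (hw y)
      have : 1 ≤ Real.exp (θ * w y) := Real.one_le_exp hy0
      have : 0 ≤ (Real.exp (θ * w y) - 1) / q := div_nonneg (by linarith) hq.le
      linarith
    · rw [← Real.exp_sum, ← sum_div, sum_add_distrib, ← mul_sum, ← mul_sum, hk]
  have hb0 : 0 ≤ θ ^ 2 * b * k := by
    rcases isEmpty_or_nonempty X with hX | ⟨⟨y⟩⟩
    · have : k = 0 := by rw [← hk]; simp
      rw [this]; simp
    · have : 0 ≤ b := (hw y).trans (hwb y)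
      positivity
  have hu0 : 0 ≤ u := by rw [hu]; positivity
  have hu2 : u ≤ 2 * θ * k / q := by
    rw [hu]
    refine div_le_div_of_nonneg_right ?_ hq.le
    have : θ * b * (θ * k) ≤ 1 * (θ * k) := mul_le_mul_of_nonneg_right hθb (by positivity)
    nlinarith
  have hu1 : u ≤ 1 := hu2.trans hp
  have hexp := exp_le_quad u hu0 hu1
  have husq : u ^ 2 ≤ (2 * θ * k / q) ^ 2 := pow_le_pow_left₀ hu0 hu2 2
  have hfin : ∏ y, (1 + (Real.exp (θ * w y) - 1) / q) - 1 - θ * (k / q) ≤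
      θ ^ 2 * (b * k / q + 4 * (k / q) ^ 2) := by
    have e1 : u = θ * (k / q) + θ ^ 2 * (b * k / q) := by rw [hu]; ring
    have e2 : (2 * θ * k / q) ^ 2 = θ ^ 2 * (4 * (k / q) ^ 2) := by ring
    rw [e2] at husq
    nlinarith
  have hfin2 := mul_le_mul_of_nonneg_left hfin (by positivity : 0 ≤ 2 * lam / δ ^ 2)
  have e3 : 2 * lam / δ ^ 2 * (θ ^ 2 * (b * k / q + 4 * (k / q) ^ 2)) =
      8 * lam * (b * k / q + 4 * (k / q) ^ 2) := by
    rw [hθ]; field_simp; ring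
  linarith

lemma P3_bound (w : X → ℝ) (b lam a k ε : ℝ) (hw : ∀ y, 0 ≤ w y) (hwb : ∀ y, w y ≤ b)
    (hk : ∑ y, w y = k) (hlam : 0 < lam) (ha : 0 < a) (hb : 2 * (lam * a) * b ≤ 1)
    (hp : 2 * (2 * (lam * a)) * k / q ≤ 1)
    (hm : 8 * Fintype.card X * (b * k / q + 4 * (k / q) ^ 2) ≤ ε * k ^ 2 / 2) :
    Pr (fun f : X → X → Fin q => ε * k ^ 2 ≤ ∑ x, (if Zw w (f x) ≤ a then (Zw w (f x)) ^ 2 else 0)) ≤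
      Real.exp (- (lam * ε * k ^ 2 / 2)) := by
  have h1 := Pr_markov (fun f : X → X → Fin q => ε * k ^ 2 ≤ ∑ x, (if Zw w (f x) ≤ a then (Zw w (f x)) ^ 2 else 0))
    (fun f => ∏ x, Real.exp (lam * (if Zw w (f x) ≤ a then (Zw w (f x)) ^ 2 else 0)))
    (Real.exp (lam * (ε * k ^ 2))) (Real.exp_pos _) (fun f => prod_nonneg fun x _ => (Real.exp_pos _).le)
    (by
      intro f hf
      rw [← Real.exp_sum, ← mul_sum]
      exact Real.exp_le_exp.2 (mul_le_mul_of_nonneg_left hf hlam.le))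
  refine h1.trans ?_
  rw [Ex_pi (fun _ (g : X → Fin q) => Real.exp (lam * (if Zw w g ≤ a then (Zw w g) ^ 2 else 0)))]
  rw [div_le_iff₀ (Real.exp_pos _), prod_const, card_univ, ← Real.exp_add]
  have h2 := row_moment (q := q) w b lam a k hw hwb hk hlam ha hb hp
  set c := 8 * lam * (b * k / q + 4 * (k / q) ^ 2) with hc
  calc _ ≤ (1 + c) ^ Fintype.card X :=
        pow_le_pow_left₀ (Ex_nonneg fun _ => (Real.exp_pos _).le) h2 _
    _ ≤ Real.exp c ^ Fintype.card X := by
        refine pow_le_pow_left₀ ?_ ?_ _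
        · exact (Ex_nonneg fun _ => (Real.exp_pos _).le).trans h2
        · linarith [Real.add_one_le_exp c]
    _ = Real.exp (Fintype.card X * c) := by rw [← Real.exp_nat_mul]
    _ ≤ _ := by
        refine Real.exp_le_exp.2 ?_
        have : Fintype.card X * c = lam * (8 * Fintype.card X * (b * k / q + 4 * (k / q) ^ 2)) := by
          rw [hc]; ring
        rw [this]
        nlinarith [mul_le_mul_of_nonneg_left hm hlam.le]

end rows
end partC

section partD
open Finset
set_option linter.unusedSectionVars false

section tri
variable {X : Type*} [Fintype X] [LinearOrder X] {q : ℕ} [NeZero q]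

/-- the three edges of a triple -/
def triE (t : X × X × X) : Finset (X × X) := {(t.1, t.2.1), (t.2.1, t.2.2), (t.1, t.2.2)}

/-- an increasing triple forming a triangle in the graph of zeros of `f` -/
def isTri (f : X → X → Fin q) (t : X × X × X) : Prop :=
  t.1 < t.2.1 ∧ t.2.1 < t.2.2 ∧ ∀ e ∈ triE t, f e.1 e.2 = 0

lemma triE_card_le (t : X × X × X) : (triE t).card ≤ 3 := card_le_three

lemma triE_card (t : X × X × X) (h1 : t.1 < t.2.1) (h2 : t.2.1 < t.2.2) : (triE t).card = 3 := by
  unfold triE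
  rw [card_eq_three]
  refine ⟨_, _, _, ?_, ?_, ?_, rfl⟩
  · intro h; exact h1.ne (Prod.mk.inj h).1
  · intro h; exact h2.ne (Prod.mk.inj h).2
  · intro h; exact h1.ne' (Prod.mk.inj h).1

lemma exists_family (f : X → X → Fin q) : ∃ F : Finset (X × X × X), (∀ t ∈ F, isTri f t) ∧
    (∀ t ∈ F, ∀ t' ∈ F, t ≠ t' → Disjoint (triE t) (triE t')) ∧
    ∀ t, isTri f t → ∃ t' ∈ F, ¬ Disjoint (triE t) (triE t') := by
  classical
  let S : Finset (Finset (X × X × X)) := univ.filter (fun F => (∀ t ∈ F, isTri f t) ∧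
    (∀ t ∈ F, ∀ t' ∈ F, t ≠ t' → Disjoint (triE t) (triE t')))
  obtain ⟨F, hF, hmax⟩ := exists_max_image S card ⟨∅, by simp [S]⟩
  have hF' := (mem_filter.1 hF).2
  refine ⟨F, hF'.1, hF'.2, ?_⟩
  intro t ht
  by_contra hcon
  push Not at hcon
  have htF : t ∉ F := by
    intro htF
    have h := hcon t htF
    rw [disjoint_self_iff_empty] at h
    have : (t.1, t.2.1) ∈ triE t := by simp [triE]
    rw [h] at this
    simp at this
  have hins : insert t F ∈ S := by
    refine mem_filter.2 ⟨mem_univ _, ?_, ?_⟩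
    · intro t' ht'
      rcases mem_insert.1 ht' with rfl | h
      · exact ht
      · exact hF'.1 t' h
    · intro a ha c hc hac
      rcases mem_insert.1 ha with rfl | ha' <;> rcases mem_insert.1 hc with rfl | hc'
      · exact absurd rfl hac
      · exact hcon c hc'
      · exact (hcon a ha').symm
      · exact hF'.2 a ha' c hc' hac
  have := hmax _ hins
  rw [card_insert_of_notMem htF] at this
  omega

/-- a maximal edge-disjoint family of triangles -/
noncomputable def fam (f : X → X → Fin q) : Finset (X × X × X) := Classical.choose (exists_family f)

lemma fam_spec (f : X → X → Fin q) : (∀ t ∈ fam f, isTri f t) ∧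
    (∀ t ∈ fam f, ∀ t' ∈ fam f, t ≠ t' → Disjoint (triE t) (triE t')) ∧
    ∀ t, isTri f t → ∃ t' ∈ fam f, ¬ Disjoint (triE t) (triE t') :=
  Classical.choose_spec (exists_family f)

/-- the triangle-free subgraph -/
def Gp (f : X → X → Fin q) (e : X × X) : Prop :=
  e.1 < e.2 ∧ f e.1 e.2 = 0 ∧ ∀ t ∈ fam f, e ∉ triE t

lemma Gp_trianglefree (f : X → X → Fin q) (x y z : X) (h1 : Gp f (x, y)) (h2 : Gp f (y, z))
    (h3 : Gp f (x, z)) : False := by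
  have ht : isTri f (x, y, z) := by
    refine ⟨h1.1, h2.1, ?_⟩
    intro e he
    simp only [triE, mem_insert, mem_singleton] at he
    rcases he with rfl | rfl | rfl
    · exact h1.2.1
    · exact h2.2.1
    · exact h3.2.1
  obtain ⟨t', ht', hd⟩ := (fam_spec f).2.2 _ ht
  rw [not_disjoint_iff] at hd
  obtain ⟨e, he, he'⟩ := hd
  simp only [triE, mem_insert, mem_singleton] at he
  rcases he with rfl | rfl | rfl
  · exact h1.2.2 t' ht' he'
  · exact h2.2.2 t' ht' he'
  · exact h3.2.2 t' ht' he'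

lemma Pr_few (E : Finset (X × X)) (t : ℕ) :
    Pr (fun f : X → X → Fin q => (E.filter (fun e => f e.1 e.2 = 0)).card ≤ 3 * t) ≤
      8 ^ t * Real.exp (- (E.card / (2 * q))) := by
  have hq : (1:ℝ) ≤ q := by exact_mod_cast Nat.one_le_iff_ne_zero.2 (NeZero.ne q)
  have h1 := Pr_markov (fun f : X → X → Fin q => (E.filter (fun e => f e.1 e.2 = 0)).card ≤ 3 * t)
    (fun f => ∏ x, ∏ y, (if (x, y) ∈ E then (if f x y = 0 then (1/2 : ℝ) else 1) else 1)) ((1/2) ^ (3 * t)) (by positivity)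
    (fun f => prod_nonneg fun x _ => prod_nonneg fun y _ => by split_ifs <;> norm_num)
    (by
      intro f hf
      rw [← Fintype.prod_prod_type (f := fun z : X × X => (if z ∈ E then (if f z.1 z.2 = 0 then (1/2 : ℝ) else 1) else 1))]
      rw [prod_ite_mem, univ_inter, prod_ite, prod_const, prod_const_one, mul_one]
      exact pow_le_pow_of_le_one (by norm_num) (by norm_num) hf)
  refine h1.trans ?_
  rw [Ex_pi2 (fun x y a => (if (x, y) ∈ E then (if a = 0 then (1/2 : ℝ) else 1) else 1))]
  have h2 : ∀ x y, Ex (fun a : Fin q => (if (x, y) ∈ E then (if a = 0 then (1/2 : ℝ) else 1) else 1)) =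
      if (x, y) ∈ E then (1:ℝ) - 1 / (2 * (q:ℝ)) else (1:ℝ) := by
    intro x y
    by_cases h : (x, y) ∈ E
    · simp only [h, if_true]
      have : ∀ a : Fin q, (if a = 0 then (1/2:ℝ) else 1) = 1 - (if a = 0 then (1/2:ℝ) else 0) := by
        intro a; split_ifs <;> norm_num
      simp only [this]
      rw [Ex_sub, Ex_const, Ex_zero]
      ring
    · simp only [h, if_false]; exact Ex_const 1
  simp only [h2]
  rw [← Fintype.prod_prod_type (f := fun z : X × X => (if z ∈ E then 1 - 1 / (2 * (q:ℝ)) else 1)),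
    prod_ite_mem, univ_inter, prod_const]
  have h3 : (1 - 1 / (2 * (q:ℝ))) ^ E.card ≤ Real.exp (- (E.card / (2 * q))) := by
    have h4 : 1 - 1 / (2 * (q:ℝ)) ≤ Real.exp (-(1 / (2 * (q:ℝ)))) := by
      linarith [Real.add_one_le_exp (-(1 / (2 * (q:ℝ))))]
    have h5 : 0 ≤ 1 - 1 / (2 * (q:ℝ)) := by
      rw [sub_nonneg, div_le_one (by linarith)]; linarith
    refine (pow_le_pow_left₀ h5 h4 _).trans ?_
    rw [← Real.exp_nat_mul]
    refine le_of_eq ?_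
    congr 1; ring
  rw [div_le_iff₀ (by positivity)]
  refine h3.trans (le_of_eq ?_)
  have : (8:ℝ) ^ t * (1/2) ^ (3 * t) = 1 := by
    rw [pow_mul, ← mul_pow]; norm_num
  rw [mul_assoc, mul_comm (Real.exp _), ← mul_assoc, this, one_mul]

/-- increasing triples with an edge in `E` -/
def triOf (E : Finset (X × X)) : Finset (X × X × X) :=
  univ.filter (fun t => t.1 < t.2.1 ∧ t.2.1 < t.2.2 ∧ ∃ e ∈ E, e ∈ triE t)

lemma triOf_card (E : Finset (X × X)) : (triOf E).card ≤ 3 * Fintype.card X * E.card := by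
  have hsub : triOf E ⊆ (E ×ˢ (univ : Finset X)).image (fun z => (z.1.1, z.1.2, z.2)) ∪
      ((E ×ˢ (univ : Finset X)).image (fun z => (z.2, z.1.1, z.1.2)) ∪
      (E ×ˢ (univ : Finset X)).image (fun z => (z.1.1, z.2, z.1.2))) := by
    rintro ⟨x, y, z⟩ ht
    obtain ⟨-, -, -, e, he, he'⟩ := mem_filter.1 ht
    simp only [triE, mem_insert, mem_singleton] at he'
    simp only [mem_union, mem_image, mem_product, mem_univ, and_true]
    rcases he' with rfl | rfl | rfl
    · exact Or.inl ⟨((x, y), z), he, rfl⟩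
    · exact Or.inr (Or.inl ⟨((y, z), x), he, rfl⟩)
    · exact Or.inr (Or.inr ⟨((x, z), y), he, rfl⟩)
  have hc : (E ×ˢ (univ : Finset X)).card = E.card * Fintype.card X := by
    rw [card_product, card_univ]
  have h1 := card_image_le (s := E ×ˢ (univ : Finset X)) (f := fun z => (z.1.1, z.1.2, z.2))
  have h2 := card_image_le (s := E ×ˢ (univ : Finset X)) (f := fun z => (z.2, z.1.1, z.1.2))
  have h3 := card_image_le (s := E ×ˢ (univ : Finset X)) (f := fun z => (z.1.1, z.2, z.1.2))
  rw [hc] at h1 h2 h3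
  have h4 := card_le_card hsub
  have h5 := card_union_le ((E ×ˢ (univ : Finset X)).image (fun z => (z.1.1, z.1.2, z.2)))
      ((E ×ˢ (univ : Finset X)).image (fun z => (z.2, z.1.1, z.1.2)) ∪
      (E ×ˢ (univ : Finset X)).image (fun z => (z.1.1, z.2, z.1.2)))
  have h6 := card_union_le ((E ×ˢ (univ : Finset X)).image (fun z => (z.2, z.1.1, z.1.2)))
      ((E ×ˢ (univ : Finset X)).image (fun z => (z.1.1, z.2, z.1.2)))
  have : 3 * Fintype.card X * E.card = 3 * (E.card * Fintype.card X) := by ring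
  omega

lemma Pr_disjTri (E : Finset (X × X)) (t : ℕ) :
    Pr (fun f : X → X → Fin q => ∃ F ∈ (triOf E).powersetCard t, (∀ a ∈ F, isTri f a) ∧
      (∀ a ∈ F, ∀ c ∈ F, a ≠ c → Disjoint (triE a) (triE c))) ≤
      (3 * Fintype.card X * E.card).choose t * (1 / (q:ℝ) ^ 3) ^ t := by
  refine Pr_exists_le _ _ _ _ ?_ (by positivity) ?_
  · rw [card_powersetCard]
    exact_mod_cast Nat.choose_le_choose t (triOf_card E)
  · intro F hF
    obtain ⟨hF1, hF2⟩ := mem_powersetCard.1 hF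
    by_cases hd : ∀ a ∈ F, ∀ c ∈ F, a ≠ c → Disjoint (triE a) (triE c)
    · refine (Pr_mono (Q := fun f : X → X → Fin q => ∀ e ∈ F.biUnion triE, f e.1 e.2 = 0) ?_).trans ?_
      · intro f hf e he
        obtain ⟨a, ha, hea⟩ := mem_biUnion.1 he
        exact (hf.1 a ha).2.2 e hea
      · rw [Pr_mat, card_biUnion hd, sum_congr rfl (g := fun _ => 3), sum_const, hF2, smul_eq_mul,
          mul_comm t 3, pow_mul]
        · simp
        · intro a ha
          have := (mem_filter.1 (hF1 ha)).2
          exact triE_card a this.1 this.2.1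
    · refine (Pr_mono (Q := fun _ => False) (fun f hf => hd hf.2)).trans ?_
      have : Pr (fun _ : X → X → Fin q => False) = 0 := by
        unfold Pr Ex; simp
      rw [this]; positivity

lemma P4_bound (E : Finset (X × X)) (hE : ∀ e ∈ E, e.1 < e.2) (t : ℕ) :
    Pr (fun f : X → X → Fin q => ∀ e ∈ E, ¬ Gp f e) ≤
      8 ^ t * Real.exp (- (E.card / (2 * q))) +
      (3 * Fintype.card X * E.card).choose t * (1 / (q:ℝ) ^ 3) ^ t := by
  refine (Pr_mono ?_).trans ((Pr_or _ _).trans (add_le_add (Pr_few E t) (Pr_disjTri E t)))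
  intro f hf
  by_cases hc : t ≤ ((fam f).filter (fun a => ∃ e ∈ E, e ∈ triE a)).card
  · right
    obtain ⟨F, hF, hFc⟩ := exists_subset_card_eq hc
    have hFf : ∀ a ∈ F, a ∈ fam f := fun a ha => (mem_filter.1 (hF ha)).1
    refine ⟨F, mem_powersetCard.2 ⟨?_, hFc⟩, ?_, ?_⟩
    · intro a ha
      have h1 := (fam_spec f).1 a (hFf a ha)
      exact mem_filter.2 ⟨mem_univ _, h1.1, h1.2.1, (mem_filter.1 (hF ha)).2⟩
    · intro a ha; exact (fam_spec f).1 a (hFf a ha)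
    · intro a ha c hc; exact (fam_spec f).2.1 a (hFf a ha) c (hFf c hc)
  · left
    push Not at hc
    have hsub : E.filter (fun e => f e.1 e.2 = 0) ⊆
        ((fam f).filter (fun a => ∃ e ∈ E, e ∈ triE a)).biUnion triE := by
      intro e he
      obtain ⟨he1, he2⟩ := mem_filter.1 he
      have h3 := hf e he1
      unfold Gp at h3
      push Not at h3
      obtain ⟨a, ha, hea⟩ := h3 (hE e he1) he2
      exact mem_biUnion.2 ⟨a, mem_filter.2 ⟨ha, e, he1, hea⟩, hea⟩
    refine (card_le_card hsub).trans (card_biUnion_le.trans ?_)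
    refine (sum_le_card_nsmul _ _ 3 fun a _ => triE_card_le a).trans ?_
    rw [smul_eq_mul]; omega
end tri
end partD

section partE
open Finset
set_option linter.unusedSectionVars false

section env
variable {X : Type*} [Fintype X] [LinearOrder X] {q : ℕ} [NeZero q]
variable {V : Type*} [Fintype V] [DecidableEq V]

/-- number of `u ∈ S` whose projection is a zero of row `x` -/
def Zs (f : X → X → Fin q) (π : V → X) (S : Finset V) (x : X) : ℕ :=
  (S.filter (fun u => f x (π u) = 0)).card

/-- the row properties of a good matrix -/
structure RowGood (f : X → X → Fin q) (π : V → X) (D K s : ℕ) (a ε : ℝ) : Prop where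
  p1 : ∀ x, (Rz f x).card ≤ D
  p2 : ∀ x x', x ≠ x' → (Rz f x ∩ Rz f x').card ≤ K
  p3 : ∀ S : Finset V, S.card = s →
    ∑ x, (if (Zs f π S x : ℝ) ≤ a then (Zs f π S x : ℝ) ^ 2 else 0) ≤ ε * s ^ 2

lemma block_count (π : V → X) (b : ℕ) (hb : ∀ y, (univ.filter (fun v => π v = y)).card ≤ b)
    (S : Finset V) (R : Finset X) : (S.filter (fun u => π u ∈ R)).card ≤ b * R.card := by
  refine card_le_mul_card_image_of_maps_to (f := π) (fun u hu => (mem_filter.1 hu).2) b ?_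
  intro y _
  refine (card_le_card ?_).trans (hb y)
  intro u hu
  exact mem_filter.2 ⟨mem_univ _, (mem_filter.1 hu).2⟩

lemma Zs_le (f : X → X → Fin q) (π : V → X) (b D : ℕ)
    (hb : ∀ y, (univ.filter (fun v => π v = y)).card ≤ b)
    (h1 : ∀ x, (Rz f x).card ≤ D) (S : Finset V) (x : X) : Zs f π S x ≤ b * D := by
  have h := block_count π b hb S (Rz f x)
  refine (le_trans (le_of_eq ?_) h).trans (Nat.mul_le_mul_left b (h1 x))
  unfold Zs Rz; congr 1; ext u; simp

lemma large_sum (f : X → X → Fin q) (π : V → X) (b D K s : ℕ) (a ε : ℝ)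
    (hb : ∀ y, (univ.filter (fun v => π v = y)).card ≤ b) (hg : RowGood f π D K s a ε)
    (ha : 0 < a) (hJ : (s:ℝ) * K * b ≤ a ^ 2 / 2) (S : Finset V) (hS : S.card = s) :
    ∑ x ∈ univ.filter (fun x => a < (Zs f π S x : ℝ)), (Zs f π S x : ℝ) ≤ 2 * s := by
  set J := univ.filter (fun x => a < (Zs f π S x : ℝ)) with hJdef
  set M := ∑ x ∈ J, (Zs f π S x : ℝ) with hM
  have hM0 : 0 ≤ M := sum_nonneg fun x _ => Nat.cast_nonneg _
  have hMJ : a * J.card ≤ M := by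
    have : J.card • a ≤ M := card_nsmul_le_sum _ _ _ fun x hx => (mem_filter.1 hx).2.le
    rw [nsmul_eq_mul] at this; linarith
  let i : X → V → ℝ := fun x u => if f x (π u) = 0 then 1 else 0
  have hZ : ∀ x, (Zs f π S x : ℝ) = ∑ u ∈ S, i x u := by
    intro x; simp only [Zs, i, card_filter]; push_cast; rfl
  have hMsum : M = ∑ u ∈ S, ∑ x ∈ J, i x u := by
    rw [hM, sum_comm]; exact sum_congr rfl fun x _ => hZ x
  have hCS : M ^ 2 ≤ s * ∑ u ∈ S, (∑ x ∈ J, i x u) ^ 2 := by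
    rw [hMsum, ← hS]; exact sq_sum_le_card_mul_sum_sq
  have hsq : ∑ u ∈ S, (∑ x ∈ J, i x u) ^ 2 = ∑ x ∈ J, ∑ x' ∈ J, ∑ u ∈ S, i x u * i x' u := by
    have : ∀ u, (∑ x ∈ J, i x u) ^ 2 = ∑ x ∈ J, ∑ x' ∈ J, i x u * i x' u := by
      intro u; rw [sq, sum_mul_sum]
    simp only [this]
    rw [sum_comm]
    refine sum_congr rfl fun x _ => ?_
    rw [sum_comm]
  have hpair : ∀ x ∈ J, ∀ x' ∈ J, ∑ u ∈ S, i x u * i x' u ≤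
      (if x = x' then (Zs f π S x : ℝ) else 0) + b * K := by
    intro x _ x' _
    have hbk : (0:ℝ) ≤ b * K := by positivity
    by_cases hxx : x = x'
    · subst hxx
      rw [if_pos rfl, hZ]
      have : ∑ u ∈ S, i x u * i x u = ∑ u ∈ S, i x u := by
        refine sum_congr rfl fun u _ => ?_
        simp only [i]; split_ifs <;> norm_num
      rw [this]; linarith
    · rw [if_neg hxx, zero_add]
      have e : ∑ u ∈ S, i x u * i x' u = ((S.filter (fun u => π u ∈ Rz f x ∩ Rz f x')).card : ℝ) := by
        rw [card_filter]; push_cast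
        refine sum_congr rfl fun u _ => ?_
        simp only [i, Rz, mem_inter, mem_filter, mem_univ, true_and]
        by_cases h1 : f x (π u) = 0 <;> by_cases h2 : f x' (π u) = 0 <;> simp [h1, h2]
      rw [e]
      have h := (block_count π b hb S (Rz f x ∩ Rz f x')).trans
        (Nat.mul_le_mul_left b (hg.p2 x x' hxx))
      exact_mod_cast h
  have hsum : ∑ x ∈ J, ∑ x' ∈ J, ∑ u ∈ S, i x u * i x' u ≤ M + (J.card : ℝ) ^ 2 * (b * K) := by
    have h1 : ∑ x ∈ J, ∑ x' ∈ J, ∑ u ∈ S, i x u * i x' u ≤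
        ∑ x ∈ J, ∑ x' ∈ J, ((if x = x' then (Zs f π S x : ℝ) else 0) + b * K) :=
      sum_le_sum fun x hx => sum_le_sum fun x' hx' => hpair x hx x' hx'
    refine h1.trans (le_of_eq ?_)
    have h2 : ∀ x ∈ J, ∑ x' ∈ J, ((if x = x' then (Zs f π S x : ℝ) else 0) + (b:ℝ) * K) =
        Zs f π S x + J.card * (b * K) := by
      intro x hx
      rw [sum_add_distrib, sum_ite_eq, if_pos hx, sum_const, nsmul_eq_mul]
    rw [sum_congr rfl h2, sum_add_distrib, sum_const, nsmul_eq_mul]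
    ring
  have hMM : M ^ 2 ≤ s * (M + (J.card : ℝ) ^ 2 * (b * K)) := by
    refine hCS.trans (mul_le_mul_of_nonneg_left ?_ (Nat.cast_nonneg _))
    rw [hsq]; exact hsum
  have hJ2 : (a * J.card) ^ 2 ≤ M ^ 2 := pow_le_pow_left₀ (by positivity) hMJ 2
  have h5 : (s:ℝ) * ((J.card : ℝ) ^ 2 * (b * K)) ≤ M ^ 2 / 2 := by
    have := mul_le_mul_of_nonneg_right hJ (by positivity : 0 ≤ (J.card : ℝ) ^ 2)
    nlinarith
  by_contra hcon
  push Not at hcon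
  have hs0 : (0:ℝ) ≤ s := Nat.cast_nonneg _
  nlinarith

lemma row_sq (f : X → X → Fin q) (π : V → X) (b D K s : ℕ) (a ε : ℝ)
    (hb : ∀ y, (univ.filter (fun v => π v = y)).card ≤ b) (hg : RowGood f π D K s a ε)
    (ha : 0 < a) (hJ : (s:ℝ) * K * b ≤ a ^ 2 / 2) (S : Finset V) (hS : S.card = s) :
    ∑ x, (Zs f π S x : ℝ) ^ 2 ≤ 2 * s * (b * D) + ε * s ^ 2 := by
  have h1 := large_sum f π b D K s a ε hb hg ha hJ S hS
  have h2 := hg.p3 S hS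
  have h3 : ∑ x, (Zs f π S x : ℝ) ^ 2 =
      ∑ x ∈ univ.filter (fun x => a < (Zs f π S x : ℝ)), (Zs f π S x : ℝ) ^ 2 +
      ∑ x, (if (Zs f π S x : ℝ) ≤ a then (Zs f π S x : ℝ) ^ 2 else 0) := by
    rw [sum_filter, ← sum_add_distrib]
    refine sum_congr rfl fun x _ => ?_
    by_cases h : a < (Zs f π S x : ℝ)
    · rw [if_pos h, if_neg (not_le.2 h), add_zero]
    · rw [if_neg h, if_pos (not_lt.1 h), zero_add]
  have h4 : ∑ x ∈ univ.filter (fun x => a < (Zs f π S x : ℝ)), (Zs f π S x : ℝ) ^ 2 ≤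
      (b * D) * ∑ x ∈ univ.filter (fun x => a < (Zs f π S x : ℝ)), (Zs f π S x : ℝ) := by
    rw [mul_sum]
    refine sum_le_sum fun x _ => ?_
    rw [sq]
    refine mul_le_mul_of_nonneg_right ?_ (Nat.cast_nonneg _)
    exact_mod_cast Zs_le f π b D hb hg.p1 S x
  rw [h3]
  have h5 := mul_le_mul_of_nonneg_left h1 (by positivity : (0:ℝ) ≤ b * D)
  nlinarith

/-- undirected adjacency from the upper triangle of the matrix -/
def adjm (f : X → X → Fin q) (x y : X) : Prop := (x < y ∧ f x y = 0) ∨ (y < x ∧ f y x = 0)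

lemma adjm_symm (f : X → X → Fin q) (x y : X) (h : adjm f x y) : adjm f y x := Or.symm h

/-- having a common neighbour -/
def codm (f : X → X → Fin q) (x y : X) : Prop := ∃ z, adjm f z x ∧ adjm f z y

lemma codm_symm (f : X → X → Fin q) (x y : X) (h : codm f x y) : codm f y x := by
  obtain ⟨z, h1, h2⟩ := h; exact ⟨z, h2, h1⟩

/-- both the matrix and its transpose are good -/
def GoodM (f : X → X → Fin q) (π : V → X) (D K s : ℕ) (a ε : ℝ) : Prop :=
  RowGood f π D K s a ε ∧ RowGood (fun x y => f y x) π D K s a ε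

open Classical in
lemma adj_count (f : X → X → Fin q) (π : V → X) (S : Finset V) (z : X) :
    (S.filter (fun u => adjm f z (π u))).card ≤ Zs f π S z + Zs (fun x y => f y x) π S z := by
  refine (card_le_card (t := S.filter (fun u => f z (π u) = 0) ∪ S.filter (fun u => f (π u) z = 0)) ?_).trans
    (card_union_le _ _)
  intro u hu
  obtain ⟨h1, h2⟩ := mem_filter.1 hu
  rw [mem_union, mem_filter, mem_filter]
  rcases h2 with h2 | h2
  · exact Or.inl ⟨h1, h2.2⟩
  · exact Or.inr ⟨h1, h2.2⟩

open Classical in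
lemma cod_pairs (f : X → X → Fin q) (π : V → X) (b D K s : ℕ) (a ε : ℝ)
    (hb : ∀ y, (univ.filter (fun v => π v = y)).card ≤ b) (hg : GoodM f π D K s a ε)
    (ha : 0 < a) (hJ : (s:ℝ) * K * b ≤ a ^ 2 / 2) (S : Finset V) (hS : S.card = s) :
    (((S ×ˢ S).filter (fun z => codm f (π z.1) (π z.2))).card : ℝ) ≤
      8 * s * (b * D) + 4 * ε * s ^ 2 := by
  have hsub : (S ×ˢ S).filter (fun z => codm f (π z.1) (π z.2)) ⊆
      univ.biUnion (fun x => S.filter (fun u => adjm f x (π u)) ×ˢ S.filter (fun u => adjm f x (π u))) := by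
    rintro ⟨u, v⟩ h
    obtain ⟨h1, x, h2, h3⟩ := mem_filter.1 h
    obtain ⟨hu, hv⟩ := mem_product.1 h1
    exact mem_biUnion.2 ⟨x, mem_univ _, mem_product.2 ⟨mem_filter.2 ⟨hu, h2⟩, mem_filter.2 ⟨hv, h3⟩⟩⟩
  have h1 := (card_le_card hsub).trans card_biUnion_le
  have h2 : (((S ×ˢ S).filter (fun z => codm f (π z.1) (π z.2))).card : ℝ) ≤
      ∑ x, ((S.filter (fun u => adjm f x (π u))).card : ℝ) ^ 2 := by
    refine (Nat.cast_le.2 h1).trans ?_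
    push_cast [card_product]
    exact le_of_eq (sum_congr rfl fun x _ => by ring)
  refine h2.trans ?_
  have h3 : ∀ x ∈ (univ : Finset X), ((S.filter (fun u => adjm f x (π u))).card : ℝ) ^ 2 ≤
      2 * (Zs f π S x : ℝ) ^ 2 + 2 * (Zs (fun x y => f y x) π S x : ℝ) ^ 2 := by
    intro x _
    have h4 : ((S.filter (fun u => adjm f x (π u))).card : ℝ) ≤ Zs f π S x + Zs (fun x y => f y x) π S x := by
      exact_mod_cast adj_count f π S x
    have h5 := pow_le_pow_left₀ (Nat.cast_nonneg _) h4 2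
    nlinarith [sq_nonneg ((Zs f π S x : ℝ) - Zs (fun x y => f y x) π S x)]
  refine (sum_le_sum h3).trans ?_
  rw [sum_add_distrib, ← mul_sum, ← mul_sum]
  have h6 := row_sq f π b D K s a ε hb hg.1 ha hJ S hS
  have h7 := row_sq (fun x y => f y x) π b D K s a ε hb hg.2 ha hJ S hS
  linarith

open Classical in
lemma adj_pairs (f : X → X → Fin q) (π : V → X) (b D K s : ℕ) (a ε : ℝ)
    (hb : ∀ y, (univ.filter (fun v => π v = y)).card ≤ b) (hg : GoodM f π D K s a ε)
    (S : Finset V) (hS : S.card = s) :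
    (((S ×ˢ S).filter (fun z => adjm f (π z.1) (π z.2))).card : ℝ) ≤ 2 * s * (b * D) := by
  have h1 : ((S ×ˢ S).filter (fun z => adjm f (π z.1) (π z.2))).card =
      ∑ u ∈ S, (S.filter (fun v => adjm f (π u) (π v))).card := by
    simp only [card_filter]
    rw [sum_product]
  have h2 : ∑ u ∈ S, (S.filter (fun v => adjm f (π u) (π v))).card ≤ S.card • (b * D + b * D) := by
    refine sum_le_card_nsmul _ _ _ fun u _ => ?_
    exact (adj_count f π S (π u)).trans
      (add_le_add (Zs_le f π b D hb hg.1.p1 S _) (Zs_le _ π b D hb hg.2.p1 S _))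
  rw [← h1, smul_eq_mul, hS] at h2
  have h3 : (((S ×ˢ S).filter (fun z => adjm f (π z.1) (π z.2))).card : ℝ) ≤ ((s * (b * D + b * D) : ℕ) : ℝ) :=
    Nat.cast_le.2 h2
  push_cast at h3
  linarith

open Classical in
lemma block_pairs (π : V → X) (b : ℕ)
    (hb : ∀ y, (univ.filter (fun v => π v = y)).card ≤ b) (S : Finset V) :
    ((S ×ˢ S).filter (fun z => π z.1 = π z.2)).card ≤ S.card * b := by
  have h1 : ((S ×ˢ S).filter (fun z => π z.1 = π z.2)).card =
      ∑ u ∈ S, (S.filter (fun v => π u = π v)).card := by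
    simp only [card_filter]
    rw [sum_product]
  rw [h1, ← smul_eq_mul]
  refine sum_le_card_nsmul _ _ _ fun u _ => ?_
  refine (card_le_card ?_).trans (hb (π u))
  intro v hv
  exact mem_filter.2 ⟨mem_univ _, (mem_filter.1 hv).2.symm⟩

/-- an admissible pair -/
def goodPair (π π' : V → X) (f2 f3 f4 : X → X → Fin q) (u v : V) : Prop :=
  π' u ≠ π' v ∧ ¬ codm f2 (π' u) (π' v) ∧ ¬ adjm f3 (π u) (π v) ∧ ¬ adjm f4 (π' u) (π' v)

lemma goodPair_symm (π π' : V → X) (f2 f3 f4 : X → X → Fin q) (u v : V)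
    (h : goodPair π π' f2 f3 f4 u v) : goodPair π π' f2 f3 f4 v u :=
  ⟨h.1.symm, fun hc => h.2.1 (codm_symm _ _ _ hc), fun hc => h.2.2.1 (adjm_symm _ _ _ hc),
    fun hc => h.2.2.2 (adjm_symm _ _ _ hc)⟩

open Classical in
/-- candidate edges supplied by `S` -/
noncomputable def edgesOf (π π' : V → X) (f2 f3 f4 : X → X → Fin q) (S : Finset V) : Finset (X × X) :=
  ((S ×ˢ S).filter (fun z => goodPair π π' f2 f3 f4 z.1 z.2 ∧ π z.1 < π z.2)).image
    (fun z => (π z.1, π z.2))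

lemma edgesOf_spec (π π' : V → X) (f2 f3 f4 : X → X → Fin q) (S : Finset V) (e : X × X)
    (he : e ∈ edgesOf π π' f2 f3 f4 S) : e.1 < e.2 ∧ ∃ u ∈ S, ∃ v ∈ S,
      goodPair π π' f2 f3 f4 u v ∧ π u = e.1 ∧ π v = e.2 := by
  classical
  obtain ⟨⟨u, v⟩, h, rfl⟩ := mem_image.1 he
  obtain ⟨h1, h2⟩ := mem_filter.1 h
  obtain ⟨hu, hv⟩ := mem_product.1 h1
  exact ⟨h2.2, u, hu, v, hv, h2.1, rfl, rfl⟩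

lemma edgesOf_card_le (π π' : V → X) (f2 f3 f4 : X → X → Fin q) (S : Finset V) :
    (edgesOf π π' f2 f3 f4 S).card ≤ S.card ^ 2 := by
  classical
  refine card_image_le.trans ((card_filter_le _ _).trans ?_)
  rw [card_product, sq]

lemma edgesOf_card_ge (π π' : V → X) (f2 f3 f4 : X → X → Fin q) (b D K s : ℕ) (a ε : ℝ)
    (hb : ∀ y, (univ.filter (fun v => π v = y)).card ≤ b)
    (hb' : ∀ y, (univ.filter (fun v => π' v = y)).card ≤ b)
    (hg2 : GoodM f2 π' D K s a ε) (hg3 : GoodM f3 π D K s a ε) (hg4 : GoodM f4 π' D K s a ε)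
    (ha : 0 < a) (hJ : (s:ℝ) * K * b ≤ a ^ 2 / 2) (S : Finset V) (hS : S.card = s)
    (hinj : Set.InjOn π S) (hε : ε ≤ 1 / 32) (hD : 1 ≤ D) (hbD : 13 * (b * D) ≤ (s:ℝ) / 8) :
    (s:ℝ) ^ 2 / 4 ≤ (edgesOf π π' f2 f3 f4 S).card := by
  classical
  have hc : (edgesOf π π' f2 f3 f4 S).card =
      ((S ×ˢ S).filter (fun z => goodPair π π' f2 f3 f4 z.1 z.2 ∧ π z.1 < π z.2)).card := by
    refine card_image_of_injOn ?_
    rintro ⟨u, v⟩ h ⟨u', v'⟩ h' heq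
    obtain ⟨h1, h2⟩ := mem_product.1 (mem_filter.1 h).1
    obtain ⟨h1', h2'⟩ := mem_product.1 (mem_filter.1 h').1
    obtain ⟨e1, e2⟩ := Prod.mk.inj heq
    rw [Prod.mk.injEq]
    exact ⟨hinj h1 h1' e1, hinj h2 h2' e2⟩
  set A := (S ×ˢ S).filter (fun z => goodPair π π' f2 f3 f4 z.1 z.2 ∧ π z.1 < π z.2) with hA
  have hsub : S ×ˢ S ⊆ A ∪ (A.image Prod.swap ∪ ((S ×ˢ S).filter (fun z => π' z.1 = π' z.2) ∪
      ((S ×ˢ S).filter (fun z => codm f2 (π' z.1) (π' z.2)) ∪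
      ((S ×ˢ S).filter (fun z => adjm f3 (π z.1) (π z.2)) ∪
       (S ×ˢ S).filter (fun z => adjm f4 (π' z.1) (π' z.2)))))) := by
    rintro ⟨u, v⟩ h
    simp only [mem_union, mem_filter, h, true_and, mem_image]
    by_cases hgp : goodPair π π' f2 f3 f4 u v
    · obtain ⟨hu, hv⟩ := mem_product.1 h
      rcases lt_trichotomy (π u) (π v) with hlt | heq | hgt
      · exact Or.inl (mem_filter.2 ⟨h, hgp, hlt⟩)
      · exact absurd (congrArg π' (hinj hu hv heq)) hgp.1
      · exact Or.inr (Or.inl ⟨(v, u), mem_filter.2 ⟨mem_product.2 ⟨hv, hu⟩,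
          goodPair_symm _ _ _ _ _ _ _ hgp, hgt⟩, rfl⟩)
    · unfold goodPair at hgp
      tauto
  have hcard := card_le_card hsub
  have u1 := hcard.trans (card_union_le _ _)
  have u2 := u1.trans (Nat.add_le_add_left (card_union_le _ _) _)
  have u3 := u2.trans (Nat.add_le_add_left (Nat.add_le_add_left (card_union_le _ _) _) _)
  have u4 := u3.trans (Nat.add_le_add_left (Nat.add_le_add_left (Nat.add_le_add_left (card_union_le _ _) _) _) _)
  have u5 := u4.trans (Nat.add_le_add_left (Nat.add_le_add_left (Nat.add_le_add_left (Nat.add_le_add_left (card_union_le _ _) _) _) _) _)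
  have hsw : (A.image Prod.swap).card ≤ A.card := card_image_le
  have hbp := block_pairs π' b hb' S
  have c2 := cod_pairs f2 π' b D K s a ε hb' hg2 ha hJ S hS
  have c3 := adj_pairs f3 π b D K s a ε hb hg3 S hS
  have c4 := adj_pairs f4 π' b D K s a ε hb' hg4 S hS
  rw [card_product, hS] at u5
  rw [hS] at hbp
  have u5' := (Nat.cast_le (α := ℝ)).2 u5
  have hsw' := (Nat.cast_le (α := ℝ)).2 hsw
  have hbp' := (Nat.cast_le (α := ℝ)).2 hbp
  push_cast at u5' hbp'
  rw [hc]
  have hs0 : (0:ℝ) ≤ s := Nat.cast_nonneg _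
  have hbb : (b:ℝ) ≤ b * D := by
    have : (1:ℝ) ≤ D := by exact_mod_cast hD
    nlinarith [Nat.cast_nonneg (α := ℝ) b]
  have k1 := mul_le_mul_of_nonneg_left hbD hs0
  have k2 := mul_le_mul_of_nonneg_left hbb hs0
  have k3 := mul_le_mul_of_nonneg_right hε (sq_nonneg (s:ℝ))
  nlinarith
end env
end partE

section partF
open Finset
set_option linter.unusedSectionVars false

section part

lemma Pr_atLeast2 {ι : Type*} [Fintype ι] [DecidableEq ι] {α : Type*} [Fintype α] [Nonempty α] [DecidableEq α]
    (A : Finset α) (U : Finset ι) (t : ℕ) :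
    Pr (fun f : ι → α => t ≤ (U.filter (fun i => f i ∈ A)).card) ≤
      U.card.choose t * ((A.card : ℝ) / Fintype.card α) ^ t := by
  refine le_trans (Pr_mono fun f hf => ?_) (Pr_atLeast A U t)
  convert hf

lemma card_fst_filter (m r : ℕ) (A : Finset (Fin m)) :
    ((univ : Finset (Fin m × Fin r)).filter (fun v => v.1 ∈ A)).card = A.card * r := by
  have : (univ : Finset (Fin m × Fin r)).filter (fun v => v.1 ∈ A) = A ×ˢ univ := by
    ext v; simp
  rw [this, card_product]; simp

lemma partition_exists (m r s : ℕ) (hmr : m = r ^ 9) (hr : 2 < r) (hs : 0 < s) (hsr : s ≤ r ^ 6) :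
    ∃ g : Fin m × Fin r → Fin m,
      (∀ y, (univ.filter (fun v => g v = y)).card ≤ 10 * r) ∧
      ∀ S : Finset (Fin m × Fin r), S.card = 10 * s →
        s ≤ (S.image Prod.fst).card ∨ s ≤ (S.image g).card := by
  have hr0 : 0 < r := by omega
  have : NeZero m := ⟨by subst hmr; positivity⟩
  have : Nonempty (Fin m) := ⟨0⟩
  have hsm : s ≤ m := hmr ▸ hsr.trans (Nat.pow_le_pow_right hr0 (by norm_num))
  have hrR : (3:ℝ) ≤ r := by exact_mod_cast hr
  have hmR : (m:ℝ) = (r:ℝ) ^ 9 := by rw [hmr]; push_cast; rfl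
  have hm0 : (m:ℝ) ≠ 0 := by rw [hmR]; positivity
  let Bad1 : (Fin m × Fin r → Fin m) → Prop := fun g =>
    ∃ y ∈ (univ : Finset (Fin m)), 10 * r ≤ ((univ : Finset (Fin m × Fin r)).filter (fun v => g v ∈ ({y} : Finset _))).card
  let Bad2 : (Fin m × Fin r → Fin m) → Prop := fun g =>
    ∃ z ∈ (powersetCard s (univ : Finset (Fin m))) ×ˢ (powersetCard s (univ : Finset (Fin m))),
      10 * s ≤ ((univ.filter (fun v : Fin m × Fin r => v.1 ∈ z.1)).filter (fun v => g v ∈ z.2)).card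
  have h1 : Pr Bad1 ≤ (r:ℝ) ^ 9 * ((1 / 2) ^ (10 * r)) := by
    refine Pr_exists_le _ _ _ _ (by rw [← hmR]; simp) (by positivity) ?_
    intro y _
    refine (Pr_atLeast2 _ _ _).trans ?_
    refine choose_mul_le _ _ (by omega) _ _ (by positivity) ?_
    simp only [card_univ, Fintype.card_prod, Fintype.card_fin, card_singleton]
    push_cast
    field_simp
    linarith
  have h1' : Pr Bad1 ≤ 1 / 3 := by
    refine h1.trans ?_
    have : (r:ℝ) ≤ 2 ^ r := by exact_mod_cast (Nat.lt_two_pow_self (n := r)).le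
    have h2 : (r:ℝ) ^ 10 ≤ 2 ^ (10 * r) := by
      rw [mul_comm, pow_mul]; exact pow_le_pow_left₀ (by positivity) this 10
    rw [one_div, inv_pow, ← div_eq_mul_inv, div_le_iff₀ (by positivity)]
    have h3 : (r:ℝ) ^ 9 * 3 ≤ r ^ 10 := by
      rw [pow_succ (r:ℝ) 9]; exact mul_le_mul_of_nonneg_left hrR (by positivity)
    linarith
  have h2 : Pr Bad2 ≤ ((r:ℝ) ^ 9) ^ (2 * s) * ((1 / r ^ 2) ^ (10 * s)) := by
    refine Pr_exists_le _ _ _ _ ?_ (by positivity) ?_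
    · rw [card_product, card_powersetCard, card_univ, Fintype.card_fin, two_mul, pow_add]
      have : ((m.choose s : ℕ) : ℝ) ≤ ((r:ℝ) ^ 9) ^ s := by
        rw [← hmR]; exact_mod_cast Nat.choose_le_pow _ _
      push_cast
      exact mul_le_mul this this (by positivity) (by positivity)
    · rintro ⟨A, B⟩ hz
      obtain ⟨hA, hB⟩ := mem_product.1 hz
      have hA := (mem_powersetCard.1 hA).2
      have hB := (mem_powersetCard.1 hB).2
      refine (Pr_atLeast2 _ _ _).trans ?_
      refine choose_mul_le _ _ (by omega) _ _ (by positivity) ?_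
      simp only at hA hB ⊢
      rw [card_fst_filter, hA, hB, Fintype.card_fin, hmR]
      have h6 : (s:ℝ) ≤ r ^ 6 := by exact_mod_cast hsr
      have hs' : (0:ℝ) < s := by exact_mod_cast hs
      push_cast
      have e1 : (3:ℝ) * (s * r) * (s / r ^ 9) = 3 * s * (s * (1 / r ^ 8)) := by field_simp
      have e2 : (1:ℝ) / r ^ 2 * (10 * s) = 10 * s * (r ^ 6 * (1 / r ^ 8)) := by field_simp
      rw [e1, e2]
      gcongr; norm_num
  have h2' : Pr Bad2 ≤ 1 / 3 := by
    refine h2.trans ?_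
    have e : ((r:ℝ) ^ 9) ^ (2 * s) * ((1 / r ^ 2) ^ (10 * s)) = (1 / r ^ 2) ^ s := by
      rw [pow_mul, pow_mul, ← mul_pow]; congr 1; field_simp
    rw [e]
    have h4 : (1:ℝ) / r ^ 2 ≤ 1 / 3 := one_div_le_one_div_of_le (by norm_num) (by nlinarith)
    refine (pow_le_of_le_one (by positivity) (h4.trans (by norm_num)) hs.ne').trans h4
  obtain ⟨g, hg⟩ := Pr_lt_one_exists (fun g => Bad1 g ∨ Bad2 g) ((Pr_or _ _).trans_lt (by linarith))
  push Not at hg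
  obtain ⟨hg1, hg2⟩ := hg
  refine ⟨g, ?_, ?_⟩
  · intro y
    by_contra hc
    push Not at hc
    refine hg1 ⟨y, mem_univ _, ?_⟩
    simpa using hc.le
  · intro S hS
    by_contra hc
    push Not at hc
    obtain ⟨A, hA1, _, hA2⟩ := exists_subsuperset_card_eq (subset_univ (S.image Prod.fst)) hc.1.le (by simpa using hsm)
    obtain ⟨B, hB1, _, hB2⟩ := exists_subsuperset_card_eq (subset_univ (S.image g)) hc.2.le (by simpa using hsm)
    refine hg2 ⟨(A, B), mem_product.2 ⟨mem_powersetCard.2 ⟨subset_univ _, hA2⟩, mem_powersetCard.2 ⟨subset_univ _, hB2⟩⟩, ?_⟩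
    rw [← hS]
    refine card_le_card fun v hv => ?_
    exact mem_filter.2 ⟨mem_filter.2 ⟨mem_univ _, hA1 (mem_image_of_mem _ hv)⟩, hB1 (mem_image_of_mem _ hv)⟩

end part
end partF

section partG
open Finset
set_option linter.unusedSectionVars false

/-- the numerical parameters -/
structure Par (r L q m s : ℕ) : Prop where
  hL : 1 ≤ L
  hlog : Real.log r ≤ (L:ℝ) ^ 2
  hbig : 10 ^ 9 * L ^ 4 ≤ r
  hq1 : q * L ≤ r ^ 5
  hq2 : r ^ 5 ≤ 2 * (q * L)
  hm : m = r ^ 9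
  hs : s = 16384 * (r ^ 5 * L)

noncomputable def aP (r L s : ℕ) : ℝ := s / (25600 * r * L ^ 2)

section good
variable {X : Type*} [Fintype X] [LinearOrder X] {q : ℕ} [NeZero q]
variable {V : Type*} [Fintype V] [DecidableEq V]

lemma Zs_eq_Zw (f : X → X → Fin q) (π : V → X) (S : Finset V) (x : X) :
    (Zs f π S x : ℝ) = Zw (fun y => ((S.filter (fun u => π u = y)).card : ℝ)) (f x) := by
  unfold Zs Zw
  rw [card_eq_sum_card_fiberwise (f := π) (t := univ) (fun _ _ => mem_coe.2 (mem_univ _))]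
  push_cast
  refine sum_congr rfl fun y _ => ?_
  by_cases h : f x y = 0
  · rw [if_pos h, filter_filter]
    refine congrArg (fun z : Finset V => (z.card : ℝ)) (filter_congr fun u _ => ?_)
    constructor
    · exact fun h => h.2
    · intro h2; exact ⟨by rw [h2]; exact h, h2⟩
  · rw [if_neg h, filter_filter, Nat.cast_eq_zero, card_eq_zero, filter_eq_empty_iff]
    rintro u _ ⟨h1, h2⟩
    rw [h2] at h1; exact h h1

lemma Par.basic {r L q m s : ℕ} (P : Par r L q m s) :
    (1:ℝ) ≤ L ∧ (10:ℝ) ^ 9 * L ^ 4 ≤ r ∧ (q:ℝ) * L ≤ r ^ 5 ∧ (r:ℝ) ^ 5 ≤ 2 * (q * L) ∧ (m:ℝ) = r ^ 9 ∧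
      (s:ℝ) = 16384 * (r ^ 5 * L) ∧ (10:ℝ) ^ 9 ≤ r ∧ (10:ℝ)^9 * L ≤ r ∧ (10:ℝ)^9 * L^2 ≤ r ∧ (10:ℝ)^9 * L^3 ≤ r := by
  have h1 : (1:ℝ) ≤ L := by exact_mod_cast P.hL
  have h2 : (10:ℝ) ^ 9 * L ^ 4 ≤ r := by exact_mod_cast P.hbig
  have hp : ∀ i ≤ 4, (10:ℝ) ^ 9 * L ^ i ≤ r := fun i hi =>
    (mul_le_mul_of_nonneg_left (pow_le_pow_right₀ h1 hi) (by norm_num)).trans h2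
  refine ⟨h1, h2, by exact_mod_cast P.hq1, by exact_mod_cast P.hq2, by rw [P.hm]; push_cast; rfl,
    by rw [P.hs]; push_cast; rfl, ?_, ?_, hp 2 (by norm_num), hp 3 (by norm_num)⟩
  · simpa using hp 0 (by norm_num)
  · simpa using hp 1 (by norm_num)

lemma Par.pow_le_exp {r L q m s : ℕ} (P : Par r L q m s) (k : ℕ) :
    (((r ^ 10 : ℕ) : ℝ)) ^ k ≤ Real.exp (10 * L ^ 2 * k) := by
  obtain ⟨h1, h2, h3, h4, h5, h6, h7, h8, h9, h10⟩ := P.basic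
  have hr0 : (0:ℝ) < r := by linarith [show (0:ℝ) < 10 ^ 9 by norm_num]
  have : ((r ^ 10 : ℕ) : ℝ) ≤ Real.exp (10 * L ^ 2) := by
    rw [← Real.log_le_iff_le_exp (by push_cast; positivity)]
    push_cast
    rw [Real.log_pow]
    have := P.hlog
    push_cast; linarith
  calc (((r ^ 10 : ℕ) : ℝ)) ^ k ≤ (Real.exp (10 * L ^ 2)) ^ k := pow_le_pow_left₀ (by positivity) this k
    _ = _ := by rw [← Real.exp_nat_mul]; congr 1; ring

lemma Par.mq {r L q m s : ℕ} (P : Par r L q m s) (hq : 0 < q) :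
    (m:ℝ) / q ≤ 2 * r ^ 4 * L ∧ (m:ℝ) / q ^ 2 ≤ 4 * L ^ 2 / r ∧ (s:ℝ) / q ≤ 32768 * L ^ 2 ∧
      16384 * (L:ℝ) ^ 2 ≤ s / q ∧ 8192 * (r:ℝ) ^ 10 ≤ q * s := by
  obtain ⟨h1, h2, h3, h4, h5, h6, h7, h8, h9, h10⟩ := P.basic
  have hr0 : (0:ℝ) < r := by linarith [show (0:ℝ) < 10 ^ 9 by norm_num]
  have hq0 : (0:ℝ) < q := by exact_mod_cast hq
  refine ⟨?_, ?_, ?_, ?_, ?_⟩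
  · rw [div_le_iff₀ hq0, h5]
    have := mul_le_mul_of_nonneg_left h4 (show (0:ℝ) ≤ r ^ 4 by positivity)
    calc (r:ℝ) ^ 9 = r ^ 4 * r ^ 5 := by ring
      _ ≤ _ := this
      _ = _ := by ring
  · rw [div_le_div_iff₀ (by positivity) hr0, h5]
    have := pow_le_pow_left₀ (by positivity) h4 2
    calc (r:ℝ) ^ 9 * r = (r ^ 5) ^ 2 := by ring
      _ ≤ _ := this
      _ = _ := by ring
  · rw [div_le_iff₀ hq0, h6]
    have := mul_le_mul_of_nonneg_left h4 (show (0:ℝ) ≤ 16384 * L by positivity)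
    linarith
  · rw [le_div_iff₀ hq0, h6]
    have := mul_le_mul_of_nonneg_left h3 (show (0:ℝ) ≤ 16384 * L by positivity)
    linarith
  · rw [h6]
    have := mul_le_mul_of_nonneg_left h4 (show (0:ℝ) ≤ 8192 * r ^ 5 by positivity)
    calc 8192 * (r:ℝ) ^ 10 = 8192 * r ^ 5 * r ^ 5 := by ring
      _ ≤ _ := this
      _ = _ := by ring

lemma Par.aPpos {r L q m s : ℕ} (P : Par r L q m s) : 0 < aP r L s := by
  obtain ⟨h1, h2, h3, h4, h5, h6, h7, h8, h9, h10⟩ := P.basic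
  have hr0 : (0:ℝ) < r := by linarith [show (0:ℝ) < 10 ^ 9 by norm_num]
  unfold aP
  rw [h6]; positivity

lemma Par.hJ {r L q m s : ℕ} (P : Par r L q m s) :
    (s:ℝ) * (40:ℕ) * (10 * r : ℕ) ≤ (aP r L s) ^ 2 / 2 := by
  obtain ⟨h1, h2, h3, h4, h5, h6, h7, h8, h9, h10⟩ := P.basic
  have hr0 : (0:ℝ) < r := by linarith [show (0:ℝ) < 10 ^ 9 by norm_num]
  have hL0 : (0:ℝ) < L := by linarith
  unfold aP
  rw [div_pow, div_div, le_div_iff₀ (by positivity)]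
  push_cast
  have hs : 800 * 25600 ^ 2 * (r:ℝ) ^ 3 * L ^ 4 ≤ s := by
    rw [h6]
    have h11 : (1:ℝ) ≤ r := by linarith [show (1:ℝ) < 10 ^ 9 by norm_num]
    have : (10:ℝ)^9 * L ^ 3 ≤ r ^ 2 := h10.trans (by nlinarith)
    have := mul_le_mul_of_nonneg_left this (show (0:ℝ) ≤ r ^ 3 * L by positivity)
    nlinarith [show (0:ℝ) ≤ r ^ 3 * L ^ 4 by positivity]
  have := mul_le_mul_of_nonneg_left hs (Nat.cast_nonneg (α := ℝ) s)
  calc _ = (s:ℝ) * (800 * 25600 ^ 2 * (r:ℝ) ^ 3 * L ^ 4) := by ring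
    _ ≤ _ := this
    _ = _ := by ring

lemma Par.p3 {r L m s : ℕ} (P : Par r L q m s) (hX : Fintype.card X = m) (π : V → X)
    (hb : ∀ y, (univ.filter (fun v => π v = y)).card ≤ 10 * r) (S : Finset V) (hS : S.card = s) :
    Pr (fun f : X → X → Fin q => (1/32:ℝ) * s ^ 2 ≤
      ∑ x, (if (Zs f π S x : ℝ) ≤ aP r L s then (Zs f π S x : ℝ) ^ 2 else 0)) ≤ Real.exp (-(20 * L ^ 2 * s)) := by
  obtain ⟨h1, h2, h3, h4, h5, h6, h7, h8, h9, h10⟩ := P.basic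
  have hq := Nat.pos_of_ne_zero (NeZero.ne q)
  obtain ⟨g1, g2, g3, g4, g5⟩ := P.mq hq
  have hr0 : (0:ℝ) < r := by linarith [show (0:ℝ) < 10 ^ 9 by norm_num]
  have hL0 : (0:ℝ) < L := by linarith
  have hq0 : (0:ℝ) < q := by exact_mod_cast hq
  have hs0 : (0:ℝ) < s := by rw [h6]; positivity
  simp only [Zs_eq_Zw]
  have hla : (1280 * L ^ 2 / s : ℝ) * aP r L s = 1 / (20 * r) := by
    unfold aP; field_simp; norm_num
  refine (P3_bound (q := q) (fun y => ((S.filter (fun u => π u = y)).card : ℝ)) (10 * r) (1280 * L ^ 2 / s) (aP r L s) s (1/32)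
    (fun y => by positivity) ?_ ?_ (by positivity) P.aPpos ?_ ?_ ?_).trans (le_of_eq ?_)
  · intro y
    have := (card_le_card (filter_subset_filter (fun v => π v = y) (subset_univ S))).trans (hb y)
    exact_mod_cast this
  · rw [← hS, card_eq_sum_card_fiberwise (f := π) (t := univ) (fun _ _ => mem_coe.2 (mem_univ _))]
    push_cast; rfl
  · rw [hla]; field_simp; norm_num
  · rw [hla]
    have : 2 * (2 * (1 / (20 * (r:ℝ)))) * s / q = (s / q) / (5 * r) := by field_simp; norm_num
    rw [this, div_le_one (by positivity)]
    linarith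
  · rw [hX]
    have e : 8 * (m:ℝ) * (10 * r * s / q + 4 * (s / q) ^ 2) =
      (s:ℝ) ^ 2 * (80 * (r * m / (q * s)) + 32 * (m / q ^ 2)) := by field_simp; ring
    rw [e]
    have e1 : (r:ℝ) * m / (q * s) ≤ 1 / 8192 := by
      rw [div_le_div_iff₀ (by positivity) (by norm_num), h5]; linarith
    have e2 : (m:ℝ) / q ^ 2 ≤ 1 / 10 ^ 7 := by
      refine g2.trans ?_
      rw [div_le_div_iff₀ hr0 (by norm_num)]; linarith
    have := mul_le_mul_of_nonneg_left (show 80 * (r * m / (q * s)) + 32 * (m / q ^ 2) ≤ (1/64:ℝ) by linarith)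
      (show (0:ℝ) ≤ s ^ 2 by positivity)
    linarith
  · congr 1; field_simp; norm_num

lemma Par.s100 {r L m s : ℕ} (P : Par r L q m s) : (100:ℝ) ≤ s := by
  obtain ⟨h1, h2, h3, h4, h5, h6, h7, h8, h9, h10⟩ := P.basic
  rw [h6]
  have := one_le_pow₀ (n := 5) (show (1:ℝ) ≤ r by linarith [show (1:ℝ) < 10 ^ 9 by norm_num])
  have := one_le_mul_of_one_le_of_one_le this h1
  linarith

set_option maxHeartbeats 1000000 in
lemma Par.rowGood {r L m s : ℕ} (P : Par r L q m s) (hX : Fintype.card X = m) (hV : Fintype.card V = r ^ 10)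
    (π : V → X) (hb : ∀ y, (univ.filter (fun v => π v = y)).card ≤ 10 * r) :
    Pr (fun f : X → X → Fin q => ¬ RowGood f π (12 * r ^ 4 * L) 40 s (aP r L s) (1/32)) ≤ 1 / 100 := by
  obtain ⟨h1, h2, h3, h4, h5, h6, h7, h8, h9, h10⟩ := P.basic
  have hq := Nat.pos_of_ne_zero (NeZero.ne q)
  obtain ⟨g1, g2, g3, g4, g5⟩ := P.mq hq
  have hr0 : (0:ℝ) < r := by linarith [show (0:ℝ) < 10 ^ 9 by norm_num]
  have hL0 : (0:ℝ) < L := by linarith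
  have hq0 : (0:ℝ) < q := by exact_mod_cast hq
  have hs0 : (0:ℝ) < s := by rw [h6]; positivity
  have hr1 : 1 ≤ r := by exact_mod_cast (show (1:ℝ) ≤ r by linarith [show (1:ℝ) < 10 ^ 9 by norm_num])
  have hr1000 : (1000:ℝ) ≤ r := by linarith [show (1000:ℝ) < 10 ^ 9 by norm_num]
  have hL1 := P.hL
  have p1 := P1_bound (X := X) (q := q) (12 * r ^ 4 * L)
  have p1' : (Fintype.card X : ℝ) * ((Fintype.card X).choose (12 * r ^ 4 * L) * (1 / (q:ℝ)) ^ (12 * r ^ 4 * L)) ≤ 1 / 1000 := by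
    rw [hX]
    have hD : 0 < 12 * r ^ 4 * L := by positivity
    have c := choose_mul_le m (12 * r ^ 4 * L) hD (1 / q) (1 / 2) (by positivity) (by
      push_cast
      have : 3 * (m:ℝ) * (1 / q) = 3 * (m / q) := by ring
      rw [this]; linarith)
    have hD2 : 10 * r ≤ 12 * r ^ 4 * L := by
      have : r ≤ r ^ 4 := Nat.le_self_pow (by norm_num) r
      nlinarith [Nat.mul_le_mul this hL1]
    have c2 : ((1:ℝ) / 2) ^ (12 * r ^ 4 * L) ≤ (1/2) ^ (10 * r) :=
      pow_le_pow_of_le_one (by norm_num) (by norm_num) hD2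
    have : (r:ℝ) ≤ 2 ^ r := by exact_mod_cast (Nat.lt_two_pow_self (n := r)).le
    have h2 : (r:ℝ) ^ 10 ≤ 2 ^ (10 * r) := by
      rw [mul_comm, pow_mul]; exact pow_le_pow_left₀ (by positivity) this 10
    calc (m:ℝ) * _ ≤ r ^ 9 * (1/2) ^ (10 * r) := by
          rw [h5]; exact mul_le_mul_of_nonneg_left (c.trans c2) (by positivity)
      _ ≤ 1 / 1000 := by
        rw [one_div, inv_pow, ← div_eq_mul_inv, div_le_iff₀ (by positivity)]
        have h3 : (r:ℝ) ^ 9 * 1000 ≤ r ^ 10 := by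
          rw [pow_succ (r:ℝ) 9]; exact mul_le_mul_of_nonneg_left hr1000 (by positivity)
        linarith
  have p2 := P2_bound (X := X) (q := q) 40
  have p2' : (Fintype.card X : ℝ) ^ 2 * ((Fintype.card X).choose 40 * (1 / (q:ℝ)) ^ (2 * 40)) ≤ 1 / 1000 := by
    rw [hX]
    have c : ((m.choose 40 : ℕ):ℝ) ≤ (m:ℝ) ^ 40 := by exact_mod_cast Nat.choose_le_pow _ _
    have e : (m:ℝ) ^ 40 * (1 / q) ^ (2 * 40) = ((m:ℝ) / q ^ 2) ^ 40 := by
      rw [pow_mul, ← mul_pow]; congr 1; field_simp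
    have d : ((m:ℝ) / q ^ 2) ^ 40 ≤ (1 / r) ^ 20 := by
      rw [show (40:ℕ) = 2 * 20 by norm_num, pow_mul]
      refine pow_le_pow_left₀ (by positivity) ?_ 20
      refine (pow_le_pow_left₀ (by positivity) g2 2).trans ?_
      rw [div_pow, div_le_div_iff₀ (by positivity) hr0]
      have : 16 * (L:ℝ) ^ 4 ≤ r := by nlinarith [show (0:ℝ) ≤ L ^ 4 by positivity]
      nlinarith [mul_le_mul_of_nonneg_right this hr0.le]
    calc (m:ℝ) ^ 2 * (((m.choose 40 : ℕ):ℝ) * (1 / (q:ℝ)) ^ (2 * 40))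
        ≤ (m:ℝ) ^ 2 * ((m:ℝ) ^ 40 * (1 / (q:ℝ)) ^ (2 * 40)) :=
          mul_le_mul_of_nonneg_left (mul_le_mul_of_nonneg_right c (by positivity)) (by positivity)
      _ ≤ (m:ℝ) ^ 2 * (1 / (r:ℝ)) ^ 20 := by
          rw [e]; exact mul_le_mul_of_nonneg_left d (by positivity)
      _ = 1 / (r:ℝ) ^ 2 := by rw [h5]; field_simp
      _ ≤ 1 / 1000 := one_div_le_one_div_of_le (by norm_num) (by nlinarith)
  have p3 : Pr (fun f : X → X → Fin q => ∃ S ∈ powersetCard s (univ : Finset V), (1/32:ℝ) * s ^ 2 ≤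
      ∑ x, (if (Zs f π S x : ℝ) ≤ aP r L s then (Zs f π S x : ℝ) ^ 2 else 0)) ≤
      (((r ^ 10 : ℕ) : ℝ)) ^ s * Real.exp (-(20 * L ^ 2 * s)) := by
    refine Pr_exists_le _ _ _ _ ?_ (by positivity) ?_
    · rw [card_powersetCard, card_univ, hV]; exact_mod_cast Nat.choose_le_pow _ _
    · intro S hS
      exact P.p3 hX π hb S (mem_powersetCard.1 hS).2
  have p3' : (((r ^ 10 : ℕ) : ℝ)) ^ s * Real.exp (-(20 * L ^ 2 * s)) ≤ 1 / 1000 := by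
    refine (mul_le_mul_of_nonneg_right (P.pow_le_exp s) (by positivity)).trans ?_
    rw [← Real.exp_add]
    have e : (10 * (L:ℝ) ^ 2 * s + -(20 * L ^ 2 * s)) ≤ - 1000 := by
      have : (100:ℝ) ≤ s := P.s100
      have h12 : (1:ℝ) ≤ L ^ 2 := one_le_pow₀ h1
      nlinarith
    refine (Real.exp_le_exp.2 e).trans ?_
    rw [Real.exp_neg, ← one_div]
    refine one_div_le_one_div_of_le (by norm_num) ?_
    linarith [Real.add_one_le_exp (1000:ℝ)]
  have key := (Pr_or (fun f : X → X → Fin q => ∃ x ∈ (univ : Finset X), (12 * r ^ 4 * L) ≤ (Rz f x).card) _).trans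
    (add_le_add p1 ((Pr_or _ _).trans (add_le_add p2 p3)))
  refine (Pr_mono ?_).trans (key.trans (by linarith))
  intro f hf
  by_contra hc
  push Not at hc
  obtain ⟨c1, c2, c3⟩ := hc
  refine hf ⟨fun x => (c1 x (mem_univ _)).le, fun x x' hx => (c2 (x, x') (mem_univ _) hx).le, fun S hS => (c3 S ?_).le⟩
  exact mem_powersetCard.2 ⟨subset_univ _, hS⟩

lemma Par.goodM {r L m s : ℕ} (P : Par r L q m s) (hX : Fintype.card X = m) (hV : Fintype.card V = r ^ 10)
    (π : V → X) (hb : ∀ y, (univ.filter (fun v => π v = y)).card ≤ 10 * r) :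
    Pr (fun f : X → X → Fin q => ¬ GoodM f π (12 * r ^ 4 * L) 40 s (aP r L s) (1/32)) ≤ 1 / 50 := by
  have h := P.rowGood hX hV π hb
  have h' := Pr_equiv (Equiv.piComm (fun _ _ : X => Fin q))
    (fun f : X → X → Fin q => ¬ RowGood f π (12 * r ^ 4 * L) 40 s (aP r L s) (1/32))
  refine (Pr_mono (Q := fun f => ¬ RowGood f π (12 * r ^ 4 * L) 40 s (aP r L s) (1/32) ∨
    ¬ RowGood (Equiv.piComm (fun _ _ : X => Fin q) f) π (12 * r ^ 4 * L) 40 s (aP r L s) (1/32)) ?_).trans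
    ((Pr_or _ _).trans (by linarith))
  intro f hf
  unfold GoodM at hf
  rw [← not_and_or]
  exact hf

end good
end partG

section partH
open Finset
set_option linter.unusedSectionVars false

lemma Pr_pi_le {ι α : Type*} [Fintype ι] [DecidableEq ι] [Fintype α] [Nonempty α] (i : ι)
    (Q : (ι → α) → Prop) (c : ℝ) (h : ∀ f, Pr (fun x : α => Q (Function.update f i x)) ≤ c) : Pr Q ≤ c := by
  classical
  let G : (ι → α) → ℝ := fun f => if Q f then 1 else 0
  have hα : (0:ℝ) < Fintype.card α := by exact_mod_cast Fintype.card_pos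
  have hf : ∀ f, ∑ x, G (Function.update f i x) ≤ c * Fintype.card α := by
    intro f
    have := h f
    unfold Pr Ex at this
    rw [div_le_iff₀ hα] at this
    convert this
  let e : ((ι → α) × α) ≃ ((ι → α) × α) :=
    { toFun := fun p => (Function.update p.1 i p.2, p.1 i)
      invFun := fun p => (Function.update p.1 i p.2, p.1 i)
      left_inv := by rintro ⟨f, x⟩; simp
      right_inv := by rintro ⟨f, x⟩; simp }
  have key : ∑ p : (ι → α) × α, G (Function.update p.1 i p.2) = ∑ p : (ι → α) × α, G p.1 :=
    Equiv.sum_comp e (fun p => G p.1)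
  rw [Fintype.sum_prod_type, Fintype.sum_prod_type] at key
  simp only [sum_const, card_univ, nsmul_eq_mul] at key
  rw [← mul_sum] at key
  have h2 : (Fintype.card α : ℝ) * ∑ f, G f ≤ Fintype.card (ι → α) * (c * Fintype.card α) := by
    rw [← key]
    refine (sum_le_card_nsmul univ _ _ (fun f _ => hf f)).trans ?_
    rw [nsmul_eq_mul, card_univ]
  have h3 : ∑ f, G f ≤ c * Fintype.card (ι → α) := by
    refine le_of_mul_le_mul_left ?_ hα
    linarith
  have hΩ : (0:ℝ) < Fintype.card (ι → α) := by exact_mod_cast Fintype.card_pos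
  unfold Pr Ex
  rw [div_le_iff₀ hΩ]
  convert h3

section joint
variable {X : Type*} [Fintype X] [LinearOrder X] {q : ℕ} [NeZero q]
variable {V : Type*} [Fintype V] [DecidableEq V]

lemma Par.p4one {r L m s : ℕ} (P : Par r L q m s) (hX : Fintype.card X = m)
    (E : Finset (X × X)) (hE : ∀ e ∈ E, e.1 < e.2) (hE1 : (s:ℝ) ^ 2 / 4 ≤ E.card) (hE2 : E.card ≤ s ^ 2) :
    Pr (fun f : X → X → Fin q => ∀ e ∈ E, ¬ Gp f e) ≤ 2 * Real.exp (-(256 * L ^ 2 * s)) := by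
  obtain ⟨h1, h2, h3, h4, h5, h6, h7, h8, h9, h10⟩ := P.basic
  have hq := Nat.pos_of_ne_zero (NeZero.ne q)
  obtain ⟨g1, g2, g3, g4, g5⟩ := P.mq hq
  have hr0 : (0:ℝ) < r := by linarith [show (0:ℝ) < 10 ^ 9 by norm_num]
  have hL0 : (0:ℝ) < L := by linarith
  have hq0 : (0:ℝ) < q := by exact_mod_cast hq
  have hs0 : (0:ℝ) < s := by rw [h6]; positivity
  have hsN : 0 < s := by exact_mod_cast hs0
  have hLN : 0 < L := P.hL
  refine (P4_bound E hE (256 * s * L ^ 2)).trans ?_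
  have a1 : (8:ℝ) ^ (256 * s * L ^ 2) * Real.exp (-(E.card / (2 * q))) ≤ Real.exp (-(256 * L ^ 2 * s)) := by
    have h8 : (8:ℝ) ≤ Real.exp 3 := by
      have := Real.add_one_le_exp (1:ℝ)
      calc (8:ℝ) = 2 ^ 3 := by norm_num
        _ ≤ (Real.exp 1) ^ 3 := pow_le_pow_left₀ (by norm_num) (by linarith) 3
        _ = _ := by rw [← Real.exp_nat_mul]; norm_num
    have : (8:ℝ) ^ (256 * s * L ^ 2) ≤ Real.exp (768 * L ^ 2 * s) := by
      refine (pow_le_pow_left₀ (by norm_num) h8 _).trans (le_of_eq ?_)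
      rw [← Real.exp_nat_mul]; congr 1; push_cast; ring
    refine (mul_le_mul_of_nonneg_right this (by positivity)).trans ?_
    rw [← Real.exp_add]
    refine Real.exp_le_exp.2 ?_
    have b1 : (s:ℝ) ^ 2 / 4 / (2 * q) ≤ E.card / (2 * q) := div_le_div_of_nonneg_right hE1 (by positivity)
    have b2 : (s:ℝ) ^ 2 / 4 / (2 * q) = s / 8 * (s / q) := by field_simp; norm_num
    have b3 := mul_le_mul_of_nonneg_left g4 (show (0:ℝ) ≤ s / 8 by positivity)
    have : (0:ℝ) ≤ L ^ 2 * s := by positivity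
    linarith
  have a2 : ((3 * Fintype.card X * E.card).choose (256 * s * L ^ 2) : ℝ) * (1 / (q:ℝ) ^ 3) ^ (256 * s * L ^ 2) ≤
      Real.exp (-(256 * L ^ 2 * s)) := by
    refine (choose_mul_le _ _ (by positivity) _ (Real.exp (-1)) (by positivity) ?_).trans (le_of_eq ?_)
    · rw [hX]
      have hE2' : (E.card : ℝ) ≤ s ^ 2 := by exact_mod_cast hE2
      have b1 : (1/3:ℝ) ≤ Real.exp (-1) := by
        rw [Real.exp_neg, ← one_div]
        exact one_div_le_one_div_of_le (Real.exp_pos 1) Real.exp_one_lt_three.le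
      have b2 : (m:ℝ) / q ^ 2 * (s / q) ≤ 4 * L ^ 2 / r * (32768 * L ^ 2) :=
        mul_le_mul g2 g3 (by positivity) (by positivity)
      have b3 : 4 * (L:ℝ) ^ 2 / r * (32768 * L ^ 2) ≤ L ^ 2 := by
        rw [div_mul_eq_mul_div, div_le_iff₀ hr0]
        have := mul_le_mul_of_nonneg_left h9 (show (0:ℝ) ≤ L ^ 2 by positivity)
        nlinarith [show (0:ℝ) ≤ L ^ 2 * L ^ 2 by positivity]
      push_cast
      calc 3 * (3 * (m:ℝ) * (E.card:ℝ)) * (1 / (q:ℝ) ^ 3) ≤ 3 * (3 * (m:ℝ) * (s:ℝ) ^ 2) * (1 / (q:ℝ) ^ 3) := by gcongr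
        _ = 9 * (s:ℝ) * ((m:ℝ) / (q:ℝ) ^ 2 * ((s:ℝ) / q)) := by field_simp; ring
        _ ≤ 9 * (s:ℝ) * (L:ℝ) ^ 2 := mul_le_mul_of_nonneg_left (b2.trans b3) (by positivity)
        _ ≤ 1/3 * (256 * (s:ℝ) * (L:ℝ) ^ 2) := by nlinarith [show (0:ℝ) ≤ (s:ℝ) * (L:ℝ) ^ 2 by positivity]
        _ ≤ _ := mul_le_mul_of_nonneg_right b1 (by positivity)
    · rw [← Real.exp_nat_mul]; congr 1; push_cast; ring
  push_cast at a2 ⊢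
  linarith

lemma Par.p4 {r L m s : ℕ} (P : Par r L q m s) (hX : Fintype.card X = m) (hV : Fintype.card V = r ^ 10)
    (π π' : V → X) (hb : ∀ y, (univ.filter (fun v => π v = y)).card ≤ 10 * r)
    (hb' : ∀ y, (univ.filter (fun v => π' v = y)).card ≤ 10 * r) (f2 f3 f4 : X → X → Fin q)
    (hg2 : GoodM f2 π' (12 * r ^ 4 * L) 40 s (aP r L s) (1/32))
    (hg3 : GoodM f3 π (12 * r ^ 4 * L) 40 s (aP r L s) (1/32))
    (hg4 : GoodM f4 π' (12 * r ^ 4 * L) 40 s (aP r L s) (1/32)) :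
    Pr (fun f : X → X → Fin q => ∃ S ∈ powersetCard s (univ : Finset V), Set.InjOn π S ∧
      ∀ e ∈ edgesOf π π' f2 f3 f4 S, ¬ Gp f e) ≤ 1 / 50 := by
  obtain ⟨h1, h2, h3, h4, h5, h6, h7, h8, h9, h10⟩ := P.basic
  have hr0 : (0:ℝ) < r := by linarith [show (0:ℝ) < 10 ^ 9 by norm_num]
  have hr0N : 0 < r := by exact_mod_cast hr0
  have hLN : 0 < L := P.hL
  have hs100 := P.s100
  have k : Pr (fun f : X → X → Fin q => ∃ S ∈ powersetCard s (univ : Finset V), Set.InjOn π S ∧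
      ∀ e ∈ edgesOf π π' f2 f3 f4 S, ¬ Gp f e) ≤ (((r ^ 10 : ℕ) : ℝ)) ^ s * (2 * Real.exp (-(256 * L ^ 2 * s))) := by
    refine Pr_exists_le _ _ _ _ ?_ (by positivity) ?_
    · rw [card_powersetCard, card_univ, hV]; exact_mod_cast Nat.choose_le_pow _ _
    · intro S hS
      have hS := (mem_powersetCard.1 hS).2
      by_cases hinj : Set.InjOn π S
      · refine (Pr_mono (fun f hf => hf.2)).trans (P.p4one hX _ (fun e he => (edgesOf_spec _ _ _ _ _ _ _ he).1) ?_ ?_)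
        · refine edgesOf_card_ge π π' f2 f3 f4 (10 * r) _ 40 s _ _ hb hb' hg2 hg3 hg4 P.aPpos P.hJ S hS hinj le_rfl
            (Nat.succ_le_of_lt (by positivity)) ?_
          rw [h6]; push_cast
          have : (0:ℝ) ≤ r ^ 5 * L := by positivity
          calc _ = 1560 * ((r:ℝ) ^ 5 * L) := by ring
            _ ≤ _ := by linarith
        · rw [← hS]; exact edgesOf_card_le _ _ _ _ _ _
      · refine (Pr_mono (Q := fun _ => False) (fun f hf => hinj hf.1)).trans ?_
        have : Pr (fun _ : X → X → Fin q => False) = 0 := by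
          unfold Pr Ex; simp
        rw [this]; positivity
  refine k.trans ?_
  refine (mul_le_mul_of_nonneg_right (P.pow_le_exp s) (by positivity)).trans ?_
  rw [mul_left_comm, ← Real.exp_add]
  have e : (10 * (L:ℝ) ^ 2 * s + -(256 * L ^ 2 * s)) ≤ - 1000 := by
    have h12 : (1:ℝ) ≤ L ^ 2 := one_le_pow₀ h1
    nlinarith
  have : Real.exp (10 * (L:ℝ) ^ 2 * s + -(256 * L ^ 2 * s)) ≤ 1 / 1000 := by
    refine (Real.exp_le_exp.2 e).trans ?_
    rw [Real.exp_neg, ← one_div]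
    refine one_div_le_one_div_of_le (by norm_num) ?_
    linarith [Real.add_one_le_exp (1000:ℝ)]
  linarith

lemma Par.joint {r L m s : ℕ} (P : Par r L q m s) (hX : Fintype.card X = m) (hV : Fintype.card V = r ^ 10)
    (π : Bool → V → X) (hb : ∀ i y, (univ.filter (fun v => π i v = y)).card ≤ 10 * r) :
    ∃ F : Bool × Bool → X → X → Fin q, ∀ i c, ∀ S : Finset V, S.card = s → Set.InjOn (π i) S →
      ∃ e ∈ edgesOf (π i) (π !i) (F (!i, c)) (F (i, !c)) (F (!i, !c)) S, Gp (F (i, c)) e := by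
  let GG : Bool × Bool → (X → X → Fin q) → Prop := fun z f => GoodM f (π z.1) (12 * r ^ 4 * L) 40 s (aP r L s) (1/32)
  let B1 : Bool × Bool → (Bool × Bool → X → X → Fin q) → Prop := fun z F => ¬ GG z (F z)
  let B2 : Bool × Bool → (Bool × Bool → X → X → Fin q) → Prop := fun z F =>
    GG (!z.1, z.2) (F (!z.1, z.2)) ∧ GG (z.1, !z.2) (F (z.1, !z.2)) ∧ GG (!z.1, !z.2) (F (!z.1, !z.2)) ∧
    ∃ S ∈ powersetCard s (univ : Finset V), Set.InjOn (π z.1) S ∧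
      ∀ e ∈ edgesOf (π z.1) (π !z.1) (F (!z.1, z.2)) (F (z.1, !z.2)) (F (!z.1, !z.2)) S, ¬ Gp (F z) e
  have hB1 : ∀ z, Pr (B1 z) ≤ 1 / 50 := by
    intro z
    refine Pr_pi_le z _ _ fun F => ?_
    simp only [B1, Function.update_self]
    exact P.goodM hX hV (π z.1) (hb z.1)
  have hB2 : ∀ z, Pr (B2 z) ≤ 1 / 50 := by
    rintro ⟨i, c⟩
    refine Pr_pi_le (i, c) _ _ fun F => ?_
    have n1 : ((!i, c) : Bool × Bool) ≠ (i, c) := by simp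
    have n2 : ((i, !c) : Bool × Bool) ≠ (i, c) := by simp
    have n3 : ((!i, !c) : Bool × Bool) ≠ (i, c) := by simp
    simp only [B2, Function.update_self, Function.update_of_ne n1, Function.update_of_ne n2, Function.update_of_ne n3]
    by_cases hg : GG (!i, c) (F (!i, c)) ∧ GG (i, !c) (F (i, !c)) ∧ GG (!i, !c) (F (!i, !c))
    · refine (Pr_mono fun f hf => hf.2.2.2).trans ?_
      exact P.p4 hX hV (π i) (π !i) (hb i) (hb !i) _ _ _ hg.1 hg.2.1 hg.2.2
    · refine (Pr_mono (Q := fun _ => False) (fun f hf => hg ⟨hf.1, hf.2.1, hf.2.2.1⟩)).trans ?_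
      have : Pr (fun _ : X → X → Fin q => False) = 0 := by
        unfold Pr Ex; simp
      rw [this]; norm_num
  have tot := Pr_exists_le (univ : Finset (Bool × Bool)) (fun z F => B1 z F ∨ B2 z F) 4 (1/25) (by simp) (by norm_num)
    (fun z _ => (Pr_or _ _).trans (by linarith [hB1 z, hB2 z]))
  obtain ⟨F, hF⟩ := Pr_lt_one_exists _ (lt_of_le_of_lt tot (by norm_num))
  push Not at hF
  have g : ∀ z, GG z (F z) := fun z => not_not.1 (hF z (mem_univ _)).1
  refine ⟨F, fun i c S hS hinj => ?_⟩
  by_contra hc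
  push Not at hc
  exact (hF (i, c) (mem_univ _)).2 ⟨g _, g _, g _, S, mem_powersetCard.2 ⟨subset_univ _, hS⟩, hinj, hc⟩

end joint
end partH

section partI
open Finset
set_option linter.unusedSectionVars false

section det
variable {X : Type*} [Fintype X] [LinearOrder X] {q : ℕ} [NeZero q]
variable {V : Type*} [Fintype V] [DecidableEq V]

/-- symmetrised pruned graph -/
def sG (f : X → X → Fin q) (x y : X) : Prop := Gp f (x, y) ∨ Gp f (y, x)

lemma sG_symm (f : X → X → Fin q) (x y : X) (h : sG f x y) : sG f y x := Or.symm h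

lemma sG_adjm (f : X → X → Fin q) (x y : X) (h : sG f x y) : adjm f x y := by
  rcases h with h | h
  · exact Or.inl ⟨h.1, h.2.1⟩
  · exact Or.inr ⟨h.1, h.2.1⟩

lemma sG_tf (f : X → X → Fin q) (x y z : X) (h1 : sG f x y) (h2 : sG f y z) (h3 : sG f x z) : False := by
  rcases h1 with h1 | h1 <;> rcases h2 with h2 | h2 <;> rcases h3 with h3 | h3
  · exact Gp_trianglefree f x y z h1 h2 h3
  · exact absurd (h1.1.trans (h2.1.trans h3.1)) (lt_irrefl _)
  · exact Gp_trianglefree f x z y h3 h2 h1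
  · exact Gp_trianglefree f z x y h3 h1 h2
  · exact Gp_trianglefree f y x z h1 h3 h2
  · exact Gp_trianglefree f y z x h2 h3 h1
  · exact absurd (h1.1.trans (h3.1.trans h2.1)) (lt_irrefl _)
  · exact Gp_trianglefree f z y x h2 h1 h3

/-- the edges of colour `c` coming from side `i` -/
def adjC (π : Bool → V → X) (F : Bool × Bool → X → X → Fin q) (i c : Bool) (u v : V) : Prop :=
  goodPair (π i) (π !i) (F (!i, c)) (F (i, !c)) (F (!i, !c)) u v ∧ sG (F (i, c)) (π i u) (π i v)

variable (π : Bool → V → X) (F : Bool × Bool → X → X → Fin q)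

lemma adjC_symm (i c : Bool) (u v : V) (h : adjC π F i c u v) : adjC π F i c v u :=
  ⟨goodPair_symm _ _ _ _ _ _ _ h.1, sG_symm _ _ _ h.2⟩

lemma adjC_core (j c : Bool) (x y z : V) (h1 : adjC π F j c x y) (h2 : adjC π F j c x z)
    (h3 : adjC π F (!j) c y z) : False := by
  have h := h3.1.2.1
  rw [Bool.not_not] at h
  exact h ⟨π j x, sG_adjm _ _ _ h1.2, sG_adjm _ _ _ h2.2⟩

lemma adjC_tf (c i j k : Bool) (u v w : V) (h1 : adjC π F i c u v) (h2 : adjC π F j c v w)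
    (h3 : adjC π F k c u w) : False := by
  by_cases hij : j = i
  · subst hij
    by_cases hk : k = j
    · subst hk; exact sG_tf _ _ _ _ h1.2 h2.2 h3.2
    · have : k = !j := by cases k <;> cases j <;> simp_all
      subst this
      exact adjC_core π F j c v u w (adjC_symm π F _ _ _ _ h1) h2 h3
  · have : j = !i := by cases i <;> cases j <;> simp_all
    subst this
    by_cases hk : k = i
    · subst hk
      exact adjC_core π F k c u v w h1 h3 h2
    · have : k = !i := by cases i <;> cases k <;> simp_all
      subst this
      refine adjC_core π F (!i) c w v u (adjC_symm π F _ _ _ _ h2) (adjC_symm π F _ _ _ _ h3) ?_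
      rw [Bool.not_not]; exact adjC_symm π F _ _ _ _ h1

lemma adjC_disj (c i j : Bool) (u v : V) (h1 : adjC π F i c u v) (h2 : adjC π F j (!c) u v) : False := by
  have ha := sG_adjm _ _ _ h1.2
  have hb := h2.1.2.2.1
  have hc := h2.1.2.2.2
  rw [Bool.not_not] at hb hc
  by_cases hij : i = j
  · subst hij; exact hb ha
  · have : i = !j := by cases i <;> cases j <;> simp_all
    subst this; exact hc ha

lemma exists_transversal (p : V → X) (S : Finset V) (s : ℕ) (h : s ≤ (S.image p).card) :
    ∃ T ⊆ S, T.card = s ∧ Set.InjOn p T := by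
  classical
  obtain ⟨T0, hT0, hinj, him⟩ : ∃ T ⊆ S, Set.InjOn p T ∧ T.image p = S.image p := by
    obtain ⟨T, h1, h2, h3⟩ := exists_subset_injOn_image_eq_of_surjOn S (S.image p) (f := p)
      (fun y hy => by simpa using hy)
    exact ⟨T, h1, by tauto, by tauto⟩
  rw [← him, card_image_of_injOn hinj] at h
  obtain ⟨T, hT, hc⟩ := exists_subset_card_eq h
  exact ⟨T, hT.trans hT0, hc, hinj.mono (coe_subset.2 hT)⟩

end det

lemma construction {r L q m s : ℕ} (P : Par r L q m s) (hq : 0 < q) :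
    ∃ E : Bool → (Fin m × Fin r) → (Fin m × Fin r) → Prop,
      (∀ c u v, E c u v → E c v u) ∧ (∀ c u v w, E c u v → E c v w → E c u w → False) ∧
      (∀ c u v, E c u v → E (!c) u v → False) ∧
      ∀ c (S : Finset (Fin m × Fin r)), S.card = 10 * s → ∃ u ∈ S, ∃ v ∈ S, u ≠ v ∧ E c u v := by
  have : NeZero q := ⟨hq.ne'⟩
  obtain ⟨h1, h2, h3, h4, h5, h6, h7, h8, h9, h10⟩ := P.basic
  have hr2 : 2 < r := by exact_mod_cast (show (2:ℝ) < r by linarith [show (2:ℝ) < 10 ^ 9 by norm_num])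
  have hs0 : 0 < s := by exact_mod_cast (show (0:ℝ) < s by linarith [P.s100])
  have hsr : s ≤ r ^ 6 := by
    have : (s:ℝ) ≤ r ^ 6 := by
      rw [h6]
      have := mul_le_mul_of_nonneg_left h8 (show (0:ℝ) ≤ r ^ 5 by positivity)
      nlinarith [show (0:ℝ) ≤ (r:ℝ) ^ 5 * L by positivity]
    exact_mod_cast this
  obtain ⟨g, hg1, hg2⟩ := partition_exists m r s P.hm hr2 hs0 hsr
  let π : Bool → (Fin m × Fin r) → Fin m := fun i => if i then g else Prod.fst
  have hb : ∀ i y, (univ.filter (fun v => π i v = y)).card ≤ 10 * r := by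
    intro i y
    cases i
    · simp only [π]
      have := card_fst_filter m r {y}
      simp only [mem_singleton, card_singleton] at this
      simp only [Bool.false_eq_true, if_false]
      rw [this]; omega
    · simpa [π] using hg1 y
  have hV : Fintype.card (Fin m × Fin r) = r ^ 10 := by
    rw [Fintype.card_prod, Fintype.card_fin, Fintype.card_fin, P.hm]; ring
  obtain ⟨F, hF⟩ := P.joint (X := Fin m) (q := q) (by simp) hV π hb
  refine ⟨fun c u v => ∃ i, adjC π F i c u v, ?_, ?_, ?_, ?_⟩
  · rintro c u v ⟨i, h⟩; exact ⟨i, adjC_symm π F _ _ _ _ h⟩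
  · rintro c u v w ⟨i, h⟩ ⟨j, h'⟩ ⟨k, h''⟩; exact adjC_tf π F c i j k u v w h h' h''
  · rintro c u v ⟨i, h⟩ ⟨j, h'⟩; exact adjC_disj π F c i j u v h h'
  · intro c S hS
    have : ∃ i, s ≤ (S.image (π i)).card := by
      rcases hg2 S hS with h | h
      · exact ⟨false, by simpa [π] using h⟩
      · exact ⟨true, by simpa [π] using h⟩
    obtain ⟨i, hi⟩ := this
    obtain ⟨T, hTS, hT, hinj⟩ := exists_transversal (π i) S s hi
    obtain ⟨e, he, hge⟩ := hF i c T hT hinj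
    obtain ⟨hlt, u, hu, v, hv, hgp, hue, hve⟩ := edgesOf_spec _ _ _ _ _ _ _ he
    refine ⟨u, hTS hu, v, hTS hv, ?_, i, hgp, Or.inl ?_⟩
    · rintro rfl; rw [hue] at hve; exact hlt.ne hve
    · rw [hue, hve]; exact hge
end partI

section partJ
open Finset

lemma h2_le {n : ℕ} (c : Coloring n) (B : ℕ) (h : ∀ S, TwoColored c S → S.card ≤ B) : h2 c ≤ B := by
  unfold h2
  refine csSup_le ⟨0, ∅, ⟨Col.r, by simp⟩, by simp⟩ ?_
  rintro k ⟨S, hS, rfl⟩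
  exact h S hS

lemma le_h2 {n : ℕ} (c : Coloring n) (S : Finset (Fin n)) (h : TwoColored c S) : S.card ≤ h2 c := by
  unfold h2
  refine le_csSup ⟨n, ?_⟩ ⟨S, h, rfl⟩
  rintro k ⟨T, _, rfl⟩
  simpa using card_le_univ T

lemma upper {r L q m s n : ℕ} (P : Par r L q m s) (hq : 0 < q) (hn : n ≤ r ^ 10) :
    h2n n {Prrr, Pbbb} ≤ 21 * s := by
  classical
  obtain ⟨E, hsym, htf, hdisj, hrich⟩ := construction P hq
  have hs0 : 1 ≤ s := by
    have : NeZero q := ⟨hq.ne'⟩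
    exact_mod_cast (show (1:ℝ) ≤ s by linarith [P.s100])
  have hV : Fintype.card (Fin m × Fin r) = r ^ 10 := by
    rw [Fintype.card_prod, Fintype.card_fin, Fintype.card_fin, P.hm]; ring
  obtain ⟨φ⟩ := Function.Embedding.nonempty_of_card_le (α := Fin n) (β := Fin m × Fin r)
    (by rw [hV, Fintype.card_fin]; exact hn)
  let c : Coloring n :=
    { col := fun i j => if E true (φ i) (φ j) then Col.r else if E false (φ i) (φ j) then Col.b else Col.y
      symm := by
        intro i j
        have h1 : E true (φ i) (φ j) ↔ E true (φ j) (φ i) := ⟨hsym _ _ _, hsym _ _ _⟩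
        have h2 : E false (φ i) (φ j) ↔ E false (φ j) (φ i) := ⟨hsym _ _ _, hsym _ _ _⟩
        simp only [h1, h2] }
  have cr : ∀ i j, c.col i j = Col.r ↔ E true (φ i) (φ j) := by
    intro i j
    simp only [c]; split_ifs <;> simp_all
  have cb : ∀ i j, c.col i j = Col.b ↔ E false (φ i) (φ j) := by
    intro i j
    have := hdisj true (φ i) (φ j)
    simp only [c]; split_ifs <;> simp_all
  have rich : ∀ t (S : Finset (Fin n)), 10 * s ≤ S.card → ∃ i ∈ S, ∃ j ∈ S, i ≠ j ∧ E t (φ i) (φ j) := by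
    intro t S hS
    obtain ⟨T, hT, hc⟩ := exists_subset_card_eq hS
    obtain ⟨u, hu, v, hv, huv, he⟩ := hrich t (T.map φ) (by rw [card_map, hc])
    obtain ⟨i, hi, rfl⟩ := mem_map.1 hu
    obtain ⟨j, hj, rfl⟩ := mem_map.1 hv
    exact ⟨i, hT hi, j, hT hj, fun h => huv (by rw [h]), he⟩
  have nbr : ∀ t (x : Fin n) (S : Finset (Fin n)), (S.filter (fun y => E t (φ x) (φ y))).card < 10 * s := by
    intro t x S
    by_contra hc
    push Not at hc
    obtain ⟨i, hi, j, hj, _, he⟩ := rich t _ hc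
    exact htf t _ _ _ (mem_filter.1 hi).2 he (mem_filter.1 hj).2
  have hav : Avoids c {Prrr, Pbbb} := by
    rintro Pt hP ⟨u, v, w, _, _, _, hpat⟩
    rcases hP with rfl | hP
    · have h : ∀ x ∈ triPattern c u v w, x = Col.r := by
        rw [hpat]; intro x hx; simpa [Prrr] using hx
      have h1 := (cr _ _).1 (h (c.col u v) (by simp [triPattern]))
      have h2 := (cr _ _).1 (h (c.col v w) (by simp [triPattern]))
      have h3 := (cr _ _).1 (h (c.col u w) (by simp [triPattern]))
      exact htf true _ _ _ h1 h2 h3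
    · rw [Set.mem_singleton_iff] at hP
      have h : ∀ x ∈ triPattern c u v w, x = Col.b := by
        rw [hpat, hP]; intro x hx; simpa [Pbbb] using hx
      have h1 := (cb _ _).1 (h (c.col u v) (by simp [triPattern]))
      have h2 := (cb _ _).1 (h (c.col v w) (by simp [triPattern]))
      have h3 := (cb _ _).1 (h (c.col u w) (by simp [triPattern]))
      exact htf false _ _ _ h1 h2 h3
  have hle : h2n n {Prrr, Pbbb} ≤ h2 c := Nat.sInf_le ⟨c, hav, rfl⟩
  refine hle.trans (h2_le c _ ?_)
  rintro S ⟨x, hx⟩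
  cases x with
  | r =>
    by_contra hc
    obtain ⟨i, hi, j, hj, hij, he⟩ := rich true S (by omega)
    exact hx i hi j hj hij ((cr _ _).2 he)
  | b =>
    by_contra hc
    obtain ⟨i, hi, j, hj, hij, he⟩ := rich false S (by omega)
    exact hx i hi j hj hij ((cb _ _).2 he)
  | y =>
    rcases S.eq_empty_or_nonempty with rfl | ⟨x, hxS⟩
    · simp
    have hsub : S ⊆ insert x (S.filter (fun y => E true (φ x) (φ y)) ∪ S.filter (fun y => E false (φ x) (φ y))) := by
      intro z hz
      by_cases hzx : z = x
      · simp [hzx]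
      have h := hx x hxS z hz (Ne.symm hzx)
      simp only [c] at h
      simp only [mem_insert, mem_union, mem_filter, hz, true_and]
      by_cases h1 : E true (φ x) (φ z)
      · exact Or.inr (Or.inl h1)
      · by_cases h2 : E false (φ x) (φ z)
        · exact Or.inr (Or.inr h2)
        · simp [h1, h2] at h
    have h1 := (card_le_card hsub).trans ((card_insert_le _ _).trans (Nat.add_le_add_right (card_union_le _ _) 1))
    have h2 := nbr true x S
    have h3 := nbr false x S
    omega
end partJ

section partK
open Finset

lemma lowerC {n : ℕ} (hn : 256 ≤ n) (c : Coloring n) (hc : Avoids c {Prrr, Pbbb}) :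
    1 / 64 * Real.sqrt (n * Real.logb 2 n) ≤ (h2 c : ℝ) := by
  classical
  have hnR : (256:ℝ) ≤ n := by exact_mod_cast hn
  have hn0 : (0:ℝ) < n := by linarith
  set Λ := Real.logb 2 n with hΛ
  have hΛ8 : 8 ≤ Λ := by
    rw [hΛ, Real.le_logb_iff_rpow_le (by norm_num) hn0]
    norm_num
    exact hn
  have h2Λ : (2:ℝ) ^ Λ = n := Real.rpow_logb (by norm_num) (by norm_num) hn0
  set Q := Real.sqrt (n * Λ) with hQ
  have hQ2 : Q * Q = n * Λ := Real.mul_self_sqrt (by positivity)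
  have hQ0 : 0 < Q := Real.sqrt_pos.2 (by positivity)
  have hQn : Real.sqrt n ≤ Q := Real.sqrt_le_sqrt (by nlinarith)
  have hQ1 : 1 ≤ Q := by nlinarith
  obtain ⟨j, hj1, hj2⟩ := exists_nat_pow_near hQ1 (show (1:ℝ) < 4 by norm_num)
  have hjΛ : Λ / 8 ≤ j := by
    have h1 : Real.sqrt n = (2:ℝ) ^ (Λ / 2) := by
      rw [Real.sqrt_eq_iff_mul_self_eq hn0.le (by positivity), ← Real.rpow_add (by norm_num), add_halves, h2Λ]
    have h3 : (4:ℝ) ^ (j + 1) = (2:ℝ) ^ ((2 * (j + 1) : ℝ)) := by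
      rw [Real.rpow_mul (by norm_num)]
      norm_num
      rw [← Real.rpow_natCast]; push_cast; rfl
    have h4 : (2:ℝ) ^ (Λ / 2) < (2:ℝ) ^ ((2 * (j + 1) : ℝ)) := by
      rw [← h1, ← h3]; exact lt_of_le_of_lt hQn hj2
    have := (Real.rpow_lt_rpow_left_iff (by norm_num)).1 h4
    linarith
  let G : SimpleGraph (Fin n) :=
    { Adj := fun u v => u ≠ v ∧ c.col u v = Col.r
      symm := ⟨fun u v h => ⟨h.1.symm, by rw [c.symm]; exact h.2⟩⟩
      loopless := ⟨fun u h => h.1 rfl⟩ }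
  have htf : ∀ u v w, G.Adj u v → G.Adj v w → G.Adj u w → False := by
    intro u v w h1 h2 h3
    refine hc Prrr (by simp) ⟨u, v, w, h1.1, h2.1, h3.1, ?_⟩
    unfold triPattern Prrr
    rw [h1.2, h2.2, h3.2]
  by_cases hdeg : ∀ v, (univ.filter (fun u => G.Adj v u)).card ≤ 4 ^ j
  · obtain ⟨W, hW, hcard⟩ := alphaLower G htf j (fun v => by convert hdeg v)
    have hle := le_h2 c W ⟨Col.r, fun a ha b hb hab h => hW a ha b hb ⟨hab, h⟩⟩
    have hleR : (W.card : ℝ) ≤ h2 c := by exact_mod_cast hle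
    have hcR : (j:ℝ) * n ≤ 8 * 4 ^ j * W.card := by
      rw [Fintype.card_fin] at hcard; exact_mod_cast hcard
    have h5 : 8 * 4 ^ j * (W.card : ℝ) ≤ 8 * Q * h2 c := by gcongr
    have h6 : Λ / 8 * n ≤ j * n := mul_le_mul_of_nonneg_right hjΛ hn0.le
    have h7 : Q * Q / 8 ≤ 8 * Q * h2 c := by rw [hQ2]; linarith
    have h8 : Q * (1 / 64 * Q) ≤ Q * h2 c := by linarith
    exact le_of_mul_le_mul_left h8 hQ0
  · push Not at hdeg
    obtain ⟨v, hv⟩ := hdeg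
    have hle := le_h2 c (univ.filter (fun u => G.Adj v u)) ⟨Col.r, by
      intro a ha b hb hab h
      exact htf v a b (mem_filter.1 ha).2 ⟨hab, h⟩ (mem_filter.1 hb).2⟩
    have h9 : (4:ℝ) ^ j ≤ h2 c := by exact_mod_cast hv.le.trans hle
    rw [pow_succ] at hj2
    linarith

lemma lowerN {n : ℕ} (hn : 256 ≤ n) : 1 / 64 * Real.sqrt (n * Real.logb 2 n) ≤ (h2n n {Prrr, Pbbb} : ℝ) := by
  have hne : {m | ∃ c : Coloring n, Avoids c {Prrr, Pbbb} ∧ h2 c = m}.Nonempty := by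
    refine ⟨_, ⟨fun _ _ => Col.y, fun _ _ => rfl⟩, ?_, rfl⟩
    rintro Pt hP ⟨u, v, w, _, _, _, hpat⟩
    rcases hP with rfl | hP
    · have : Col.y ∈ Prrr := by rw [← hpat]; simp [triPattern]
      simp [Prrr] at this
    · rw [Set.mem_singleton_iff] at hP
      have : Col.y ∈ Pbbb := by rw [← hP, ← hpat]; simp [triPattern]
      simp [Pbbb] at this
  obtain ⟨c, hc, he⟩ := Nat.sInf_mem hne
  have := lowerC hn c hc
  unfold h2n
  rw [← he]; exact this

lemma exists_R : ∃ R : ℕ, 3 ≤ R ∧ ∀ r : ℕ, R ≤ r → (16 * 10 ^ 9 : ℝ) * (Real.log r) ^ 2 ≤ r := by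
  have h := (Real.isLittleO_pow_log_id_atTop (n := 2)).bound (show (0:ℝ) < 1 / (16 * 10 ^ 9) by norm_num)
  have h' := (tendsto_natCast_atTop_atTop (R := ℝ)).eventually h
  obtain ⟨R, hR⟩ := Filter.eventually_atTop.1 h'
  refine ⟨max R 3, le_max_right _ _, fun r hr => ?_⟩
  have := hR r ((le_max_left _ _).trans hr)
  simp only [id, Real.norm_eq_abs, abs_pow, sq_abs, Nat.abs_cast] at this
  rw [div_mul_eq_mul_div, one_mul, le_div_iff₀ (by norm_num)] at this
  linarith

lemma upperN : ∃ n0 : ℕ, ∀ n : ℕ, n0 ≤ n →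
    (h2n n {Prrr, Pbbb} : ℝ) ≤ (21 * 16384 * 64) * Real.sqrt (n * Real.logb 2 n) := by
  obtain ⟨R, hR3, hR⟩ := exists_R
  refine ⟨R ^ 10, fun n hn => ?_⟩
  have hR0 : 0 < R := by omega
  have hRp : R ≤ R ^ 10 := Nat.le_self_pow (by norm_num) R
  have hn3 : 3 ≤ n := by omega
  have hex : ∃ r, n ≤ r ^ 10 := ⟨n, Nat.le_self_pow (by norm_num) n⟩
  set r := Nat.find hex with hr
  have hr1 : n ≤ r ^ 10 := Nat.find_spec hex
  have hrn : r ≤ n := Nat.find_min' hex (Nat.le_self_pow (by norm_num) n)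
  have hRr : R ≤ r := by
    by_contra hc
    push Not at hc
    have := Nat.pow_lt_pow_left hc (show 10 ≠ 0 by norm_num)
    omega
  have hr2 : (r - 1) ^ 10 < n := by
    have := Nat.find_min hex (m := r - 1) (by omega)
    omega
  have hr10 : (r:ℝ) ^ 10 ≤ 1024 * n := by
    have h1 : r ≤ 2 * (r - 1) := by omega
    have h2 : r ^ 10 ≤ 1024 * (r - 1) ^ 10 := by
      refine (Nat.pow_le_pow_left h1 10).trans (le_of_eq ?_)
      rw [mul_pow]; norm_num
    have : r ^ 10 ≤ 1024 * n := by omega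
    exact_mod_cast this
  have hrR : (3:ℝ) ≤ r := by exact_mod_cast (hR3.trans hRr)
  have hlog1 : 1 ≤ Real.log r := by
    rw [Real.le_log_iff_exp_le (by linarith)]
    linarith [Real.exp_one_lt_three]
  set l := Real.sqrt (Real.log r) with hl
  have hl2 : l ^ 2 = Real.log r := Real.sq_sqrt (by linarith)
  have hl1 : 1 ≤ l := by rw [hl]; exact Real.one_le_sqrt.2 hlog1
  set L := ⌈l⌉₊ with hL
  have hLl : l ≤ L := Nat.le_ceil l
  have hLu : (L:ℝ) ≤ 2 * l := by
    have := Nat.ceil_lt_add_one (show 0 ≤ l by linarith)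
    linarith
  have hL1 : 1 ≤ L := by exact_mod_cast hl1.trans hLl
  have hbig : 10 ^ 9 * L ^ 4 ≤ r := by
    have h1 : (L:ℝ) ^ 4 ≤ (2 * l) ^ 4 := pow_le_pow_left₀ (by positivity) hLu 4
    have h2 : (2 * l) ^ 4 = 16 * (Real.log r) ^ 2 := by rw [← hl2]; ring
    have := hR r hRr
    have : (10:ℝ) ^ 9 * (L:ℝ) ^ 4 ≤ r := by linarith
    exact_mod_cast this
  have hLr : L ≤ r ^ 5 := by
    have h1 : L ≤ L ^ 4 := Nat.le_self_pow (by norm_num) L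
    have h2 : r ≤ r ^ 5 := Nat.le_self_pow (by norm_num) r
    omega
  have hq0 : 0 < r ^ 5 / L := Nat.div_pos hLr hL1
  have P : Par r L (r ^ 5 / L) (r ^ 9) (16384 * (r ^ 5 * L)) := by
    refine ⟨hL1, ?_, hbig, Nat.div_mul_le_self _ _, ?_, rfl, rfl⟩
    · rw [← hl2]; exact pow_le_pow_left₀ (by linarith) hLl 2
    · have h1 := Nat.lt_mul_div_succ (r ^ 5) hL1
      have h2 : L * (r ^ 5 / L + 1) ≤ 2 * (r ^ 5 / L * L) := by
        nlinarith
      omega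
  have hup := upper P hq0 hr1
  have hupR : (h2n n {Prrr, Pbbb} : ℝ) ≤ 21 * (16384 * ((r:ℝ) ^ 5 * L)) := by exact_mod_cast hup
  have hn0 : (0:ℝ) < n := by exact_mod_cast (show 0 < n by omega)
  have e1 : (r:ℝ) ^ 5 ≤ 32 * Real.sqrt n := by
    refine le_of_sq_le_sq ?_ (by positivity)
    rw [mul_pow, Real.sq_sqrt hn0.le, ← pow_mul]
    norm_num; exact hr10
  have e2 : (L:ℝ) ≤ 2 * Real.sqrt (Real.logb 2 n) := by
    refine hLu.trans (mul_le_mul_of_nonneg_left (Real.sqrt_le_sqrt ?_) (by norm_num))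
    have h1 : Real.log r ≤ Real.log n := Real.log_le_log (by linarith) (by exact_mod_cast hrn)
    refine h1.trans ?_
    rw [Real.logb, le_div_iff₀ (Real.log_pos (by norm_num))]
    have := Real.log_two_lt_d9
    nlinarith
  have e3 := mul_le_mul e1 e2 (by positivity) (by positivity)
  have e4 : Real.sqrt (n * Real.logb 2 n) = Real.sqrt n * Real.sqrt (Real.logb 2 n) := Real.sqrt_mul hn0.le _
  rw [e4]
  linarith

end partK

theorem stmt4 :
    ∃ C1 C2 : ℝ, 0 < C1 ∧ 0 < C2 ∧ ∃ n0 : ℕ, ∀ n : ℕ, n0 ≤ n →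
      C1 * Real.sqrt (n * Real.logb 2 n) ≤ (h2n n {Prrr, Pbbb} : ℝ) ∧
      (h2n n {Prrr, Pbbb} : ℝ) ≤ C2 * Real.sqrt (n * Real.logb 2 n) := by
  obtain ⟨n0, h⟩ := upperN
  exact ⟨1 / 64, 21 * 16384 * 64, by norm_num, by norm_num, max n0 256, fun n hn =>
    ⟨lowerN ((le_max_right _ _).trans hn), h n ((le_max_left _ _).trans hn)⟩⟩
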